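/- arXiv:1011.5479 — 3 statements merged into one kernel-verified Lean document; each statement's English description precedes it below -/
import Mathlib

section
/- Let N ≥ 1 and let c ∈ h^{1/2} be N-generic, with simple positive eigenvalues λ_1² > … > λ_N² of Γ_cΓ_c*, normalization constants ν_1, …, ν_N, and let μ_1² > … > μ_N² be the positive eigenvalues of Γ̃_cΓ̃_c*. Then for every j = 1, …, N: ν_j² = (1 − μ_j²/λ_j²) ∏_{k≠j} (λ_j² − μ_k²)/(λ_j² − λ_k²), and for every ℓ = 1, …, N: Σ_{j=1}^N λ_j²ν_j²/(λ_j² − μ_ℓ²)² = (1/(λ_ℓ² − μ_ℓ²)) ∏_{k≠ℓ} (μ_ℓ² − μ_k²)/(μ_ℓ² − λ_k²). -/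
open scoped InnerProductSpace ComplexConjugate ENNReal

noncomputable section

/-- The Hilbert space `ℓ²(ℕ, ℂ)`. -/
abbrev L2 : Type := lp (fun _ : ℕ => ℂ) 2

/-- Membership in the space `h^{1/2}`: `c ∈ ℓ²` and `Σ n |c_n|² < ∞`. -/
def InH12 (c : ℕ → ℂ) : Prop :=
  Memℓp c 2 ∧ Summable (fun n : ℕ => (n : ℝ) * ‖c n‖ ^ 2)

/-- `Γ` is the Hankel operator of symbol `c`: `(Γ x)_n = Σ_p c_{n+p} x_p`. -/
def IsHankelOp (c : ℕ → ℂ) (Γ : L2 →L[ℂ] L2) : Prop :=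
  ∀ x : L2, ∀ n : ℕ, (Γ x : ℕ → ℂ) n = ∑' p : ℕ, c (n + p) * (x : ℕ → ℂ) p

/-- The shifted sequence `c̃ : n ↦ c_{n+1}`. -/
def shiftSeq (c : ℕ → ℂ) : ℕ → ℂ := fun n => c (n + 1)

/-- The operator `Γ Γ*`. -/
def opT (Γ : L2 →L[ℂ] L2) : L2 →L[ℂ] L2 :=
  Γ ∘L ContinuousLinearMap.adjoint Γ

/-- `e₀ = (1,0,0,…) ∈ ℓ²`. -/
def e0 : L2 := lp.single 2 0 1

/-- Generic min–max value `a_j` (for `j ≥ 1`) of a bounded operator `T` on a Hilbert space: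
the infimum over subspaces `F` of dimension at most `j-1` of the supremum of `Re ⟨T h, h⟩`
over unit vectors `h` orthogonal to `F`. -/
def minmaxVal {H : Type*} [NormedAddCommGroup H] [InnerProductSpace ℂ H]
    (T : H →L[ℂ] H) (j : ℕ) : ℝ :=
  ⨅ F : {F : Submodule ℂ H // Module.finrank ℂ F ≤ j - 1},
    ⨆ h : {h : H // ‖h‖ = 1 ∧ ∀ y ∈ F.1, ⟪y, h⟫_ℂ = 0},
      (⟪T h.1, h.1⟫_ℂ).re

/-- `λ_j(Γ)²` (for `j ≥ 1`): the `j`-th min–max value of `Γ Γ*`. -/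
def svalSq (Γ : L2 →L[ℂ] L2) (j : ℕ) : ℝ := minmaxVal (opT Γ) j

lemma summable_sq_of_memℓp {f : ℕ → ℂ} (hf : Memℓp f 2) :
    Summable fun n : ℕ => ‖f n‖ ^ 2 := by
  have h := hf.summable (p := 2) (by norm_num)
  have h2 : ((2 : ℝ≥0∞).toReal) = ((2 : ℕ) : ℝ) := by norm_num
  rw [h2] at h
  simpa [Real.rpow_natCast] using h

/-- The weighted sequence `n ↦ √(1+n) · c_n`, whose `ℓ²` norm is the `h^{1/2}` norm of `c`. -/
def wSeq (c : ℕ → ℂ) : ℕ → ℂ := fun n => (Real.sqrt (1 + (n : ℝ)) : ℂ) * c n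

lemma memℓp_wSeq {c : ℕ → ℂ} (hc : InH12 c) : Memℓp (wSeq c) 2 := by
  apply memℓp_gen
  have h2 : ((2 : ℝ≥0∞).toReal) = ((2 : ℕ) : ℝ) := by norm_num
  rw [h2]
  have hs : Summable fun n : ℕ => (1 + (n : ℝ)) * ‖c n‖ ^ 2 := by
    have := (summable_sq_of_memℓp hc.1).add hc.2
    convert this using 2 with n
    ring
  have key : ∀ n : ℕ, ‖wSeq c n‖ ^ ((2 : ℕ) : ℝ) = (1 + (n : ℝ)) * ‖c n‖ ^ 2 := by
    intro n
    rw [Real.rpow_natCast]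
    have h1 : (0 : ℝ) ≤ 1 + (n : ℝ) := by positivity
    simp only [wSeq, norm_mul, Complex.norm_real, Real.norm_eq_abs,
      abs_of_nonneg (Real.sqrt_nonneg _)]
    rw [mul_pow, Real.sq_sqrt h1]
  exact (summable_congr fun n => key n).mpr hs

/-- The space `h^{1/2}` as a type. -/
def H12 : Type := {c : ℕ → ℂ // InH12 c}

/-- The isometric embedding of `h^{1/2}` into `ℓ²` given by `c ↦ (√(1+n) c_n)_n`;
the `h^{1/2}` norm of `c` is the `ℓ²` norm of its image. -/
def H12.toL2 (c : H12) : L2 := ⟨wSeq c.1, memℓp_wSeq c.2⟩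

lemma H12.toL2_injective : Function.Injective H12.toL2 := by
  intro c d h
  apply Subtype.ext
  funext n
  have h' : wSeq c.1 n = wSeq d.1 n := congrFun (congrArg Subtype.val h) n
  have hs : (Real.sqrt (1 + (n : ℝ)) : ℂ) ≠ 0 := by
    simp only [ne_eq, Complex.ofReal_eq_zero]
    positivity
  exact mul_left_cancel₀ hs h'

/-- The metric (hence the topology) on `h^{1/2}` induced by the `h^{1/2}` norm
`(Σ (1+n)|c_n|²)^{1/2}`, obtained from the isometric embedding into `ℓ²`. -/
instance : MetricSpace H12 := MetricSpace.induced H12.toL2 H12.toL2_injective inferInstance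

/-- `c` is `N`-generic, witnessed by its Hankel operator `Γ`: `Γ` has rank `N`, `Γ Γ*` has `N`
simple positive eigenvalues `λ_1² > … > λ_N²`, the norms `ν_j` of the orthogonal projections
of `e₀` onto the corresponding (one-dimensional) eigenspaces are positive, and `Σ ν_j² < 1`.
(For a simple eigenvalue, the norm of the projection of `e₀` on the eigenspace equals
`|⟨v, e₀⟩|` for any unit eigenvector `v`.) -/
def NGenericData (Γ : L2 →L[ℂ] L2) (N : ℕ) (lam nu : Fin N → ℝ) : Prop :=
  LinearMap.rank Γ.toLinearMap = N ∧
  (∀ j k : Fin N, j < k → lam k < lam j) ∧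
  (∀ j : Fin N, 0 < lam j) ∧
  {z : ℂ | z ≠ 0 ∧ Module.End.HasEigenvalue (opT Γ).toLinearMap z}
    = Set.range (fun j : Fin N => ((lam j : ℂ)) ^ 2) ∧
  (∀ j : Fin N,
    Module.finrank ℂ (Module.End.eigenspace (opT Γ).toLinearMap ((lam j : ℂ) ^ 2)) = 1) ∧
  (∀ j : Fin N, ∃ v : L2, ‖v‖ = 1 ∧ (opT Γ) v = ((lam j : ℂ) ^ 2) • v ∧
    nu j = ‖(⟪v, e0⟫_ℂ)‖) ∧
  (∀ j : Fin N, 0 < nu j) ∧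
  (∑ j : Fin N, (nu j) ^ 2) < 1

/-!
Since `Γ̃ = ΓS` for the unilateral shift `S` and `1 - SS*` is the projection onto `e₀`, the
operator `ΓΓ*` is a rank-one perturbation of `Γ̃Γ̃*`: `ΓΓ* = Γ̃Γ̃* + ⟨·, b⟩ b` with `b = Γ e₀`. In
an orthonormal eigenbasis of `ΓΓ*` on its range, every eigenvalue `μ² ≠ 0` of `Γ̃Γ̃*` therefore
solves the secular equation `∑ⱼ |⟨vⱼ, b⟩|² / (λⱼ² - μ²) = 1`. The symmetry of the Hankel matrix says
that `x ↦ Γ x̄` commutes with `ΓΓ*`; its square is `ΓΓ*`, so on a one-dimensional eigenspace it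
sends `vⱼ` to `α vⱼ` with `|α| = λⱼ`, whence `|⟨vⱼ, b⟩|² = λⱼ² νⱼ²`. Finally the `N` secular
equations determine the rational function `1 - ∑ⱼ rⱼ / (aⱼ - X) = ∏ₖ (X - bₖ) / ∏ₖ (X - aₖ)`: its
residue at `aⱼ` and its derivative at `b_ℓ` are the two formulas.
-/

open ContinuousLinearMap (adjoint)

section PartialFractions

open Polynomial Lagrange Finset

variable {ι K : Type*} [Fintype ι] [DecidableEq ι] [Field K] {a b r : ι → K}

lemma eval_nodal_erase_of_ne {x : K} {j : ι} (hx : x ≠ a j) :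
    (nodal (univ.erase j) a).eval x = (nodal univ a).eval x / (x - a j) := by
  rw [nodal_eq_mul_nodal_erase (mem_univ j), eval_mul, eval_sub, eval_X, eval_C,
    mul_div_cancel_left₀ _ (sub_ne_zero.2 hx)]

lemma degree_sum_C_mul_nodal_erase_lt (r a : ι → K) :
    (∑ j, C (r j) * nodal (univ.erase j) a).degree < Fintype.card ι := by
  refine (degree_sum_le _ _).trans_lt ((Finset.sup_lt_iff (WithBot.bot_lt_coe _)).2 fun j _ => ?_)
  calc (C (r j) * nodal (univ.erase j) a).degree ≤ (nodal (univ.erase j) a).degree := by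
        rw [← smul_eq_C_mul]
        exact degree_smul_le _ _
    _ < Fintype.card ι := by
        rw [degree_nodal, ← card_univ]
        exact mod_cast card_erase_lt_of_mem (mem_univ j)

lemma nodal_add_sum_eq_nodal (hb : Function.Injective b) (hab : ∀ j l, a j ≠ b l)
    (h : ∀ l, ∑ j, r j / (a j - b l) = 1) :
    nodal univ a + ∑ j, C (r j) * nodal (univ.erase j) a = nodal univ b := by
  refine eq_of_degree_sub_lt_of_eval_index_eq univ hb.injOn ?_ fun l _ => ?_
  · rw [add_sub_right_comm, card_univ]
    refine (degree_add_le _ _).trans_lt (max_lt ?_ (degree_sum_C_mul_nodal_erase_lt r a))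
    have hdeg : (nodal univ a).degree = (nodal univ b).degree := by simp only [degree_nodal]
    calc (nodal univ a - nodal univ b).degree < (nodal univ a).degree :=
          degree_sub_lt_left hdeg nodal_ne_zero (by rw [nodal_monic, nodal_monic])
      _ = Fintype.card ι := by rw [degree_nodal, card_univ]
  · have hsum : ∑ j, r j * ((nodal univ a).eval (b l) / (b l - a j))
        = -(nodal univ a).eval (b l) := by
      rw [← mul_one (-_), ← h l, mul_sum]
      refine sum_congr rfl fun j _ => ?_
      rw [← neg_sub (a j), div_neg]
      ring
    simp only [eval_add, eval_finsetSum, eval_mul, eval_C, eval_nodal_erase_of_ne (hab _ l).symm,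
      hsum, add_neg_cancel, eval_nodal_at_node (mem_univ l)]

/-- Dividing `∏ₖ (X - bₖ)` by `X - b_l` stands in for differentiating it at `b_l`. -/
lemma nodal_erase_eq_sum (hb : Function.Injective b) (hab : ∀ j l, a j ≠ b l)
    (h : ∀ l, ∑ j, r j / (a j - b l) = 1) (l : ι) :
    nodal (univ.erase l) b = ∑ j, C (r j / (a j - b l)) * nodal (univ.erase j) a := by
  refine mul_left_cancel₀ (X_sub_C_ne_zero (b l)) ?_
  have hterm (j : ι) : (X - C (b l)) * (C (r j / (a j - b l)) * nodal (univ.erase j) a)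
      = C (r j / (a j - b l)) * nodal univ a + C (r j) * nodal (univ.erase j) a := by
    have hr : C (r j) = C (r j / (a j - b l)) * (C (a j) - C (b l)) := by
      rw [← C_sub, ← C_mul, div_mul_cancel₀ _ (sub_ne_zero.2 (hab j l))]
    rw [nodal_eq_mul_nodal_erase (mem_univ j), hr]
    ring
  rw [← nodal_eq_mul_nodal_erase (mem_univ l), ← nodal_add_sum_eq_nodal hb hab h, mul_sum,
    sum_congr rfl fun j _ => hterm j, sum_add_distrib, ← sum_mul, ← map_sum, h l, C_1, one_mul]

lemma eq_sub_mul_prod_div (ha : Function.Injective a) (hb : Function.Injective b)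
    (hab : ∀ j l, a j ≠ b l) (h : ∀ l, ∑ j, r j / (a j - b l) = 1) (j : ι) :
    r j = (a j - b j) * ∏ k ∈ univ.erase j, (a j - b k) / (a j - a k) := by
  have heval := congrArg (eval (a j)) (nodal_add_sum_eq_nodal hb hab h)
  have hoff (i : ι) (hi : i ≠ j) : (nodal (univ.erase i) a).eval (a j) = 0 :=
    eval_nodal_at_node (mem_erase.2 ⟨hi.symm, mem_univ j⟩)
  simp only [eval_add, eval_finsetSum, eval_mul, eval_C, eval_nodal_at_node (mem_univ j), zero_add]
    at heval
  rw [sum_eq_single j (fun i _ hi => by rw [hoff i hi, mul_zero]) (by simp), eval_nodal, eval_nodal,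
    ← mul_prod_erase univ _ (mem_univ j)] at heval
  have hne : ∏ k ∈ univ.erase j, (a j - a k) ≠ 0 :=
    prod_ne_zero_iff.2 fun k hk => sub_ne_zero.2 (ha.ne (ne_of_mem_erase hk).symm)
  rw [prod_div_distrib, ← mul_div_assoc, eq_div_iff hne, heval]

lemma sum_div_sub_sq_eq_mul_prod_div (hb : Function.Injective b) (hab : ∀ j l, a j ≠ b l)
    (h : ∀ l, ∑ j, r j / (a j - b l) = 1) (l : ι) :
    ∑ j, r j / (a j - b l) ^ 2
      = 1 / (a l - b l) * ∏ k ∈ univ.erase l, (b l - b k) / (b l - a k) := by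
  have hne : ∏ k ∈ univ.erase l, (b l - a k) ≠ 0 :=
    prod_ne_zero_iff.2 fun k _ => sub_ne_zero.2 (hab k l).symm
  have heval := congrArg (eval (b l)) (nodal_erase_eq_sum hb hab h l)
  simp only [eval_finsetSum, eval_mul, eval_C, eval_nodal_erase_of_ne (hab _ l).symm] at heval
  have hsum : ∑ j, r j / (a j - b l) * ((nodal univ a).eval (b l) / (b l - a j))
      = -(∑ j, r j / (a j - b l) ^ 2) * (nodal univ a).eval (b l) := by
    rw [← sum_neg_distrib, sum_mul]
    refine sum_congr rfl fun j _ => ?_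
    rw [← neg_sub (a j), div_neg, sq, ← div_div]
    ring
  rw [hsum, eval_nodal, eval_nodal, ← mul_prod_erase univ _ (mem_univ l)] at heval
  rw [prod_div_distrib, div_mul_div_comm, one_mul,
    eq_div_iff (mul_ne_zero (sub_ne_zero.2 (hab l l)) hne), heval]
  ring

end PartialFractions

section SecularEquation

variable {ι K : Type*} [Fintype ι] [Field K] {a b b' x : ι → K} {m : K}

lemma sum_mul_ne_zero_of_sub_mul_eq (ha : Function.Injective a) (hb' : ∀ j, b' j ≠ 0) (hx : x ≠ 0)
    (h : ∀ j, (a j - m) * x j = (∑ i, b' i * x i) * b j) : ∑ i, b' i * x i ≠ 0 := by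
  intro hβ
  simp only [hβ, zero_mul, mul_eq_zero, sub_eq_zero] at h
  obtain ⟨j, hj⟩ := Function.ne_iff.1 hx
  have hsupp (i : ι) (hij : i ≠ j) : x i = 0 :=
    (h i).resolve_left fun hi => hij (ha (hi.trans ((h j).resolve_right hj).symm))
  rw [Fintype.sum_eq_single j fun i hij => by rw [hsupp i hij, mul_zero]] at hβ
  exact mul_ne_zero (hb' j) hj hβ

lemma secular_equation_of_sub_mul_eq (ha : Function.Injective a) (hb : ∀ j, b j ≠ 0)
    (hb' : ∀ j, b' j ≠ 0) (hx : x ≠ 0) (h : ∀ j, (a j - m) * x j = (∑ i, b' i * x i) * b j) :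
    (∀ j, a j ≠ m) ∧ ∑ j, b j * b' j / (a j - m) = 1 := by
  have hβ := sum_mul_ne_zero_of_sub_mul_eq ha hb' hx h
  have ham (j : ι) : a j ≠ m := fun hj => by
    have hj' := h j
    rw [sub_eq_zero.2 hj, zero_mul] at hj'
    exact mul_ne_zero hβ (hb j) hj'.symm
  refine ⟨ham, mul_left_cancel₀ hβ ?_⟩
  rw [mul_one, Finset.mul_sum]
  refine Finset.sum_congr rfl fun j _ => ?_
  rw [← mul_div_assoc, div_eq_iff (sub_ne_zero.2 (ham j))]
  linear_combination -b' j * h j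

variable {𝕜 E : Type*} [RCLike 𝕜] [NormedAddCommGroup E] [InnerProductSpace 𝕜 E]

lemma inner_eq_sum_of_mem_span_orthonormal {v : ι → E} (hv : Orthonormal 𝕜 v) {w : E}
    (hw : w ∈ Submodule.span 𝕜 (Set.range v)) (y : E) :
    ⟪y, w⟫_𝕜 = ∑ j, ⟪y, v j⟫_𝕜 * ⟪v j, w⟫_𝕜 := by
  obtain ⟨x, rfl⟩ := (Submodule.mem_span_range_iff_exists_fun 𝕜).1 hw
  simp only [hv.inner_right_fintype, inner_sum, inner_smul_right, mul_comm]

lemma secular_equation_of_rankOne_perturbation {T : E →ₗ[𝕜] E} (hT : T.IsSymmetric) {v : ι → E}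
    (hv : Orthonormal 𝕜 v) {a : ι → 𝕜} (ha : Function.Injective a)
    (hTv : ∀ j, T (v j) = a j • v j) {b w : E} {m : 𝕜} (hb : ∀ j, ⟪v j, b⟫_𝕜 ≠ 0)
    (hw : w ∈ Submodule.span 𝕜 (Set.range v)) (hw0 : w ≠ 0)
    (hTw : T w = m • w + ⟪b, w⟫_𝕜 • b) :
    (∀ j, a j ≠ m) ∧ ∑ j, ⟪v j, b⟫_𝕜 * ⟪b, v j⟫_𝕜 / (a j - m) = 1 := by
  have hx : (fun j => ⟪v j, w⟫_𝕜) ≠ 0 := fun h => hw0 <| by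
    rw [← inner_self_eq_zero (𝕜 := 𝕜), inner_eq_sum_of_mem_span_orthonormal hv hw]
    exact Finset.sum_eq_zero fun j _ => by rw [congrFun h j, Pi.zero_apply, mul_zero]
  refine secular_equation_of_sub_mul_eq (b' := fun j => ⟪b, v j⟫_𝕜) ha hb
    (fun j => inner_eq_zero_symm.not.1 (hb j)) hx fun j => ?_
  have hreal : conj (a j) = a j := hT.conj_eigenvalue_eq_self <|
    Module.End.hasEigenvalue_of_hasEigenvector
      ⟨Module.End.mem_eigenspace_iff.2 (hTv j), hv.ne_zero j⟩
  have hcoord : ⟪v j, T w⟫_𝕜 = a j * ⟪v j, w⟫_𝕜 := by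
    rw [← hT, hTv, inner_smul_left, hreal]
  rw [hTw, inner_add_right, inner_smul_right, inner_smul_right] at hcoord
  rw [← inner_eq_sum_of_mem_span_orthonormal hv hw]
  linear_combination -hcoord

end SecularEquation

section RangeOfEigenvectors

lemma orthonormal_of_isSymmetric_of_apply_eq_smul {ι 𝕜 E : Type*} [RCLike 𝕜]
    [NormedAddCommGroup E] [InnerProductSpace 𝕜 E] {T : E →ₗ[𝕜] E} (hT : T.IsSymmetric)
    {v : ι → E} {a : ι → 𝕜} (ha : Function.Injective a) (hv : ∀ j, ‖v j‖ = 1)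
    (hTv : ∀ j, T (v j) = a j • v j) : Orthonormal 𝕜 v :=
  ⟨hv, fun i j hij => hT.orthogonalFamily_eigenspaces (ha.ne hij)
    ⟨v i, Module.End.mem_eigenspace_iff.2 (hTv i)⟩ ⟨v j, Module.End.mem_eigenspace_iff.2 (hTv j)⟩⟩

lemma span_range_eq_range_of_rank_eq_card {ι K V W : Type*} [Fintype ι] [DivisionRing K]
    [AddCommGroup V] [Module K V] [AddCommGroup W] [Module K W] {f : V →ₗ[K] W} {v : ι → W}
    (hf : f.rank = Fintype.card ι) (hv : LinearIndependent K v) (hvf : ∀ j, v j ∈ f.range) :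
    Submodule.span K (Set.range v) = f.range := by
  have : FiniteDimensional K f.range :=
    Module.rank_lt_aleph0_iff.1 (hf.trans_lt Cardinal.natCast_lt_aleph0)
  refine Submodule.eq_of_le_of_finrank_le (Submodule.span_le.2 (Set.range_subset_iff.2 hvf)) ?_
  rw [finrank_span_eq_card hv, Module.finrank_eq_of_rank_eq hf]

end RangeOfEigenvectors

section ComplexSymmetric

variable {ι 𝕜 : Type*} [RCLike 𝕜]

lemma inner_star_star (x y : lp (fun _ : ι => 𝕜) 2) : ⟪star x, star y⟫_𝕜 = ⟪y, x⟫_𝕜 := by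
  rw [lp.inner_eq_tsum, lp.inner_eq_tsum]
  exact tsum_congr fun i => by simp [mul_comm]

/-- An operator on `ℓ²` is complex symmetric when its adjoint is its conjugate by the entrywise
complex conjugation, i.e. when its matrix is symmetric. -/
def IsComplexSymmetric (Γ : lp (fun _ : ι => 𝕜) 2 →L[𝕜] lp (fun _ : ι => 𝕜) 2) : Prop :=
  ∀ x, adjoint Γ x = star (Γ (star x))

namespace IsComplexSymmetric

variable {Γ : lp (fun _ : ι => 𝕜) 2 →L[𝕜] lp (fun _ : ι => 𝕜) 2} {z : 𝕜}
  {v : lp (fun _ : ι => 𝕜) 2}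

lemma map_star_map_star (hΓ : IsComplexSymmetric Γ) (x : lp (fun _ : ι => 𝕜) 2) :
    Γ (star (Γ (star x))) = (Γ ∘L adjoint Γ) x := by
  rw [← hΓ x, ContinuousLinearMap.comp_apply]

lemma map_star_mem_eigenspace (hΓ : IsComplexSymmetric Γ)
    (hv : Module.End.HasEigenvector (Γ ∘L adjoint Γ).toLinearMap z v) :
    Γ (star v) ∈ Module.End.eigenspace (Γ ∘L adjoint Γ).toLinearMap z := by
  have hz : conj z = z :=
    (ContinuousLinearMap.isPositive_self_comp_adjoint Γ).isSymmetric.conj_eigenvalue_eq_self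
      (Module.End.hasEigenvalue_of_hasEigenvector hv)
  have hTv : (Γ ∘L adjoint Γ) v = z • v := hv.apply_eq_smul
  refine Module.End.mem_eigenspace_iff.2 ?_
  calc (Γ ∘L adjoint Γ) (Γ (star v)) = Γ (star ((Γ ∘L adjoint Γ) v)) := by
        rw [← hΓ.map_star_map_star, ← hΓ.map_star_map_star]
    _ = z • Γ (star v) := by rw [hTv, star_smul, map_smul, ← starRingEnd_apply, hz]

lemma exists_map_star_eq_smul (hΓ : IsComplexSymmetric Γ)
    (hv : Module.End.HasEigenvector (Γ ∘L adjoint Γ).toLinearMap z v)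
    (hdim : Module.finrank 𝕜 (Module.End.eigenspace (Γ ∘L adjoint Γ).toLinearMap z) = 1) :
    ∃ α : 𝕜, ‖α‖ ^ 2 = ‖z‖ ∧ Γ (star v) = α • v := by
  have hmem := hΓ.map_star_mem_eigenspace hv
  rw [eq_span_singleton_of_mem_of_finrank_eq_one hdim hv.1 hv.2] at hmem
  obtain ⟨α, hα⟩ := Submodule.mem_span_singleton.1 hmem
  refine ⟨α, ?_, hα.symm⟩
  have hαz : (star α * α) • v = z • v := by
    calc (star α * α) • v = Γ (star (Γ (star v))) := by
          rw [← hα, star_smul, map_smul, ← hα, smul_smul]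
      _ = z • v := by rw [hΓ.map_star_map_star]; exact hv.apply_eq_smul
  rw [← smul_left_injective 𝕜 hv.2 hαz, norm_mul, norm_star, sq]

lemma norm_inner_map_sq (hΓ : IsComplexSymmetric Γ)
    (hv : Module.End.HasEigenvector (Γ ∘L adjoint Γ).toLinearMap z v)
    (hdim : Module.finrank 𝕜 (Module.End.eigenspace (Γ ∘L adjoint Γ).toLinearMap z) = 1)
    {e : lp (fun _ : ι => 𝕜) 2} (he : star e = e) :
    ‖⟪v, Γ e⟫_𝕜‖ ^ 2 = ‖z‖ * ‖⟪v, e⟫_𝕜‖ ^ 2 := by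
  obtain ⟨α, hα, hΓv⟩ := hΓ.exists_map_star_eq_smul hv hdim
  have hinner : ⟪v, Γ e⟫_𝕜 = α * ⟪e, v⟫_𝕜 := by
    rw [← ContinuousLinearMap.adjoint_inner_left, hΓ, ← inner_smul_right, ← hΓv, ← inner_star_star,
      he, star_star]
  rw [hinner, norm_mul, mul_pow, hα, norm_inner_symm]

end IsComplexSymmetric

end ComplexSymmetric

section Hankel

lemma inner_single_one_left (p : ℕ) (x : L2) : ⟪(lp.single 2 p 1 : L2), x⟫_ℂ = (x : ℕ → ℂ) p := by
  rw [lp.inner_single_left, RCLike.inner_apply, map_one, mul_one]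

lemma star_e0 : star e0 = e0 := by
  ext n
  rcases eq_or_ne n 0 with rfl | hn <;> simp [e0, *]

namespace IsHankelOp

variable {c : ℕ → ℂ} {Γ Γt : L2 →L[ℂ] L2}

lemma apply_single (hΓ : IsHankelOp c Γ) (p n : ℕ) :
    (Γ (lp.single 2 p 1) : ℕ → ℂ) n = c (n + p) := by
  rw [hΓ, tsum_eq_single p fun q hq => by simp [hq]]
  simp

lemma adjoint_apply (hΓ : IsHankelOp c Γ) (x : L2) (p : ℕ) :
    (adjoint Γ x : ℕ → ℂ) p = ∑' n, conj (c (n + p)) * (x : ℕ → ℂ) n := by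
  rw [← inner_single_one_left, ContinuousLinearMap.adjoint_inner_right, lp.inner_eq_tsum]
  exact tsum_congr fun n => by rw [hΓ.apply_single, RCLike.inner_apply, mul_comm]

lemma isComplexSymmetric (hΓ : IsHankelOp c Γ) : IsComplexSymmetric Γ := by
  intro x
  ext p
  rw [hΓ.adjoint_apply, lp.star_apply, hΓ, tsum_star]
  exact tsum_congr fun n => by simp [mul_comm, add_comm]

lemma adjoint_apply_shift (hΓ : IsHankelOp c Γ) (hΓt : IsHankelOp (shiftSeq c) Γt) (x : L2)
    (p : ℕ) : (adjoint Γt x : ℕ → ℂ) p = (adjoint Γ x : ℕ → ℂ) (p + 1) := by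
  rw [hΓ.adjoint_apply, hΓt.adjoint_apply]
  rfl

lemma inner_adjoint_adjoint (hΓ : IsHankelOp c Γ) (hΓt : IsHankelOp (shiftSeq c) Γt) (x y : L2) :
    ⟪adjoint Γ x, adjoint Γ y⟫_ℂ
      = ⟪x, Γ e0⟫_ℂ * ⟪Γ e0, y⟫_ℂ + ⟪adjoint Γt x, adjoint Γt y⟫_ℂ := by
  have hzero (z : L2) : (adjoint Γ z : ℕ → ℂ) 0 = ⟪Γ e0, z⟫_ℂ := by
    rw [← inner_single_one_left, ContinuousLinearMap.adjoint_inner_right, e0]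
  rw [lp.inner_eq_tsum, (lp.summable_inner (𝕜 := ℂ) (adjoint Γ x) (adjoint Γ y)).tsum_eq_zero_add,
    hzero, hzero, RCLike.inner_apply, inner_conj_symm, mul_comm, lp.inner_eq_tsum]
  exact congrArg _ (tsum_congr fun p => by
    rw [hΓ.adjoint_apply_shift hΓt, hΓ.adjoint_apply_shift hΓt])

lemma opT_apply_eq_add (hΓ : IsHankelOp c Γ) (hΓt : IsHankelOp (shiftSeq c) Γt) (x : L2) :
    opT Γ x = opT Γt x + ⟪Γ e0, x⟫_ℂ • Γ e0 := by
  refine ext_inner_right ℂ fun y => ?_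
  rw [inner_add_left, inner_smul_left, inner_conj_symm, opT, opT, ContinuousLinearMap.comp_apply,
    ContinuousLinearMap.comp_apply, ← ContinuousLinearMap.adjoint_inner_right Γ,
    ← ContinuousLinearMap.adjoint_inner_right Γt, hΓ.inner_adjoint_adjoint hΓt, add_comm]

lemma mem_range_of_opT_shift_apply_eq_smul (hΓ : IsHankelOp c Γ)
    (hΓt : IsHankelOp (shiftSeq c) Γt) {z : ℂ} (hz : z ≠ 0) {w : L2} (hw : opT Γt w = z • w) :
    w ∈ Γ.toLinearMap.range := by
  rw [← Submodule.smul_mem_iff _ hz, ← hw, eq_sub_of_add_eq (hΓ.opT_apply_eq_add hΓt w).symm]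
  exact sub_mem ⟨adjoint Γ w, rfl⟩ (Submodule.smul_mem _ _ ⟨e0, rfl⟩)

end IsHankelOp

lemma opT_isSymmetric (Γ : L2 →L[ℂ] L2) : (opT Γ).toLinearMap.IsSymmetric :=
  (ContinuousLinearMap.isPositive_self_comp_adjoint Γ).isSymmetric

end Hankel

section Generic

lemma sq_injective_of_strictAnti {ι R : Type*} [LinearOrder ι] [Semiring R] [LinearOrder R]
    [IsStrictOrderedRing R] {f : ι → R} (hf : StrictAnti f) (hpos : ∀ j, 0 < f j) :
    Function.Injective fun j => f j ^ 2 := fun i j hij =>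
  hf.injective ((sq_eq_sq₀ (hpos i).le (hpos j).le).1 hij)

namespace NGenericData

variable {c : ℕ → ℂ} {Γ Γt : L2 →L[ℂ] L2} {N : ℕ} {lam nu : Fin N → ℝ}

lemma sq_injective (h : NGenericData Γ N lam nu) : Function.Injective fun j => lam j ^ 2 :=
  sq_injective_of_strictAnti (fun j k hjk => h.2.1 j k hjk) h.2.2.1

lemma ofReal_sq_injective (h : NGenericData Γ N lam nu) :
    Function.Injective fun j => (lam j : ℂ) ^ 2 := by
  simpa only [Function.comp_def, Complex.ofReal_pow] using
    Complex.ofReal_injective.comp h.sq_injective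

lemma exists_orthonormal_eigenvectors (h : NGenericData Γ N lam nu) :
    ∃ v : Fin N → L2, Orthonormal ℂ v ∧ Submodule.span ℂ (Set.range v) = Γ.toLinearMap.range ∧
      (∀ j, opT Γ (v j) = (lam j : ℂ) ^ 2 • v j) ∧ ∀ j, nu j = ‖⟪v j, e0⟫_ℂ‖ := by
  have hinj := h.ofReal_sq_injective
  obtain ⟨hrank, -, hpos, -, -, hv, -⟩ := h
  choose v hnorm hTv hnu using hv
  have hortho : Orthonormal ℂ v :=
    orthonormal_of_isSymmetric_of_apply_eq_smul (opT_isSymmetric Γ) hinj hnorm hTv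
  refine ⟨v, hortho, ?_, hTv, hnu⟩
  refine span_range_eq_range_of_rank_eq_card (by rw [hrank, Fintype.card_fin])
    hortho.linearIndependent fun j => ?_
  have hlam : (lam j : ℂ) ^ 2 ≠ 0 := mod_cast (pow_pos (hpos j) 2).ne'
  rw [← Submodule.smul_mem_iff _ hlam, ← hTv j]
  exact ⟨adjoint Γ (v j), rfl⟩

lemma norm_inner_map_e0_sq (h : NGenericData Γ N lam nu) (hΓ : IsHankelOp c Γ) (j : Fin N)
    {v : L2} (hv : v ≠ 0) (hTv : opT Γ v = (lam j : ℂ) ^ 2 • v) :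
    ‖⟪v, Γ e0⟫_ℂ‖ ^ 2 = lam j ^ 2 * ‖⟪v, e0⟫_ℂ‖ ^ 2 := by
  obtain ⟨-, -, -, -, hdim, -⟩ := h
  rw [hΓ.isComplexSymmetric.norm_inner_map_sq ⟨Module.End.mem_eigenspace_iff.2 hTv, hv⟩ (hdim j)
    star_e0, norm_pow, Complex.norm_real, Real.norm_eq_abs, sq_abs]

lemma secular_equation (h : NGenericData Γ N lam nu) (hΓ : IsHankelOp c Γ)
    (hΓt : IsHankelOp (shiftSeq c) Γt) {z : ℂ} (hz : z ≠ 0)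
    (hev : Module.End.HasEigenvalue (opT Γt).toLinearMap z) :
    (∀ j, (lam j : ℂ) ^ 2 ≠ z) ∧
      ∑ j, (lam j : ℂ) ^ 2 * (nu j : ℂ) ^ 2 / ((lam j : ℂ) ^ 2 - z) = 1 := by
  obtain ⟨v, hv, hspan, hTv, hnu⟩ := h.exists_orthonormal_eigenvectors
  obtain ⟨w, hw⟩ := hev.exists_hasEigenvector
  have hTtw : opT Γt w = z • w := hw.apply_eq_smul
  have hTw : opT Γ w = z • w + ⟪Γ e0, w⟫_ℂ • Γ e0 := by rw [hΓ.opT_apply_eq_add hΓt, hTtw]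
  have hwspan : w ∈ Submodule.span ℂ (Set.range v) :=
    hspan ▸ hΓ.mem_range_of_opT_shift_apply_eq_smul hΓt hz hTtw
  have hnorm (j : Fin N) : ‖⟪v j, Γ e0⟫_ℂ‖ ^ 2 = lam j ^ 2 * nu j ^ 2 := by
    rw [h.norm_inner_map_e0_sq hΓ j (hv.ne_zero j) (hTv j), hnu]
  have hinj := h.ofReal_sq_injective
  obtain ⟨-, -, hpos, -, -, -, hnupos, -⟩ := h
  have hb (j : Fin N) : ⟪v j, Γ e0⟫_ℂ ≠ 0 := by
    rw [← norm_ne_zero_iff, ← pow_ne_zero_iff two_ne_zero, hnorm]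
    exact (mul_pos (pow_pos (hpos j) 2) (pow_pos (hnupos j) 2)).ne'
  have hweight (j : Fin N) :
      ⟪v j, Γ e0⟫_ℂ * ⟪Γ e0, v j⟫_ℂ = (lam j : ℂ) ^ 2 * (nu j : ℂ) ^ 2 := by
    rw [← inner_conj_symm (Γ e0), Complex.mul_conj']
    exact mod_cast hnorm j
  simpa only [hweight] using
    secular_equation_of_rankOne_perturbation (opT_isSymmetric Γ) hv hinj hTv hb hwspan hw.2 hTw

end NGenericData

end Generic

/-- Explicit formulas for the normalization constants `ν_j` and the quantities
`b_ℓ = Σ_j λ_j²ν_j²/(λ_j²-μ_ℓ²)²` in terms of the singular values of `Γ_c` and `Γ̃_c`,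
for an `N`-generic `c`. -/
theorem statement10 (N : ℕ) (hN : 1 ≤ N) (c : ℕ → ℂ) (hc : InH12 c)
    (Γ Γt : L2 →L[ℂ] L2) (hΓ : IsHankelOp c Γ) (hΓt : IsHankelOp (shiftSeq c) Γt)
    (lam nu : Fin N → ℝ) (hgen : NGenericData Γ N lam nu)
    (mu : Fin N → ℝ)
    (hmupos : ∀ m : Fin N, 0 < mu m)
    (hmuanti : ∀ m l : Fin N, m < l → mu l < mu m)
    (hmu : {z : ℂ | z ≠ 0 ∧ Module.End.HasEigenvalue (opT Γt).toLinearMap z}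
      = Set.range (fun m : Fin N => ((mu m : ℂ)) ^ 2)) :
    (∀ j : Fin N,
      nu j ^ 2 = (1 - mu j ^ 2 / lam j ^ 2) *
        ∏ k ∈ Finset.univ.erase j,
          (lam j ^ 2 - mu k ^ 2) / (lam j ^ 2 - lam k ^ 2)) ∧
    (∀ l : Fin N,
      (∑ j : Fin N, lam j ^ 2 * nu j ^ 2 / (lam j ^ 2 - mu l ^ 2) ^ 2)
        = (1 / (lam l ^ 2 - mu l ^ 2)) *
          ∏ k ∈ Finset.univ.erase l,
            (mu l ^ 2 - mu k ^ 2) / (mu l ^ 2 - lam k ^ 2)) := by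
  have ha := hgen.sq_injective
  have hb := sq_injective_of_strictAnti (fun m l hml => hmuanti m l hml) hmupos
  have hsec (l : Fin N) := hgen.secular_equation hΓ hΓt (z := (mu l : ℂ) ^ 2)
    (hmu.ge ⟨l, rfl⟩).1 (hmu.ge ⟨l, rfl⟩).2
  have hab (j l : Fin N) : lam j ^ 2 ≠ mu l ^ 2 := mod_cast (hsec l).1 j
  have hsum (l : Fin N) : ∑ j, lam j ^ 2 * nu j ^ 2 / (lam j ^ 2 - mu l ^ 2) = 1 :=
    mod_cast (hsec l).2
  refine ⟨fun j => ?_, sum_div_sub_sq_eq_mul_prod_div hb hab hsum⟩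
  have hlam : lam j ^ 2 ≠ 0 := pow_ne_zero 2 (hgen.2.2.1 j).ne'
  rw [one_sub_div hlam, div_mul_eq_mul_div, eq_div_iff hlam, mul_comm]
  exact eq_sub_mul_prod_div ha hb hab hsum j

end
end

section
/- The set of all c ∈ h^{1/2} such that every positive eigenvalue of Γ_cΓ_c* is a simple eigenvalue, and such that for every positive eigenvalue of Γ_cΓ_c* the orthogonal projection of e_0 onto the corresponding eigenspace is nonzero, is a dense G_δ subset of the Hilbert space h^{1/2}. -/
open scoped InnerProductSpace ComplexConjugate ENNReal

noncomputable section

/-!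
In the coordinates `x_n = √(1 + n) c_n`, which turn the `h^{1/2}` norm into the `ℓ²` norm,
`c ↦ Γ_c` is a continuous linear map whose values are compact operators. Both requirements on the
positive eigenvalues of `Γ_c Γ_c*` say together that no eigenvector for a positive eigenvalue is
orthogonal to `e₀`.

By compactness, the symbols for which some eigenvalue at least `1 / (n + 1)` has an eigenvector
orthogonal to `e₀` form a closed set, and the generic set is the complement of the union of these
closed sets.

If `c` vanishes beyond `n`, then `Γ_c Γ_c*` lives on the first `n + 1` coordinates, where it is
`A = C Cᴴ` for a finite Hankel matrix `C`, and `c` is generic as soon as the Krylov determinant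
`det (e₀, A e₀, …, Aⁿ e₀)` is nonzero. Along the segment from `c` to `δ_{n-1} + δ_n` this
determinant is a polynomial in the real parameter; at the endpoint `A` is tridiagonal with ones
next to the diagonal, so the polynomial is not zero there. It thus has finitely many zeros, and `c`
is a limit of generic symbols. Finitely supported symbols are dense.
-/

open Filter Topology Matrix

section Eigenvectors

variable {𝕜 E : Type*} [RCLike 𝕜] [NormedAddCommGroup E] [InnerProductSpace 𝕜 E]

/-- No eigenvector of `T` for a positive eigenvalue is orthogonal to `e`: this encodes at once
that the positive eigenvalues are simple and that `e` has a nonzero projection onto each of the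
corresponding eigenspaces. -/
def SeparatesPosEigenvectors (e : E) (T : E →L[𝕜] E) : Prop :=
  ∀ a : ℝ, 0 < a → Disjoint (Module.End.eigenspace T.toLinearMap (a : 𝕜)) (𝕜 ∙ e)ᗮ

theorem finrank_eq_one_and_exists_inner_ne_zero_iff {W : Submodule 𝕜 E} (hW : W ≠ ⊥) (e : E) :
    (Module.finrank 𝕜 W = 1 ∧ ∃ v ∈ W, ⟪v, e⟫_𝕜 ≠ 0) ↔ Disjoint W (𝕜 ∙ e)ᗮ := by
  simp only [Submodule.disjoint_def, Submodule.mem_orthogonal_singleton_iff_inner_left]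
  constructor
  · rintro ⟨hrank, v, hv, hve⟩ x hx hxe
    have hv0 : (⟨v, hv⟩ : W) ≠ 0 := by
      rintro h
      simp [(Submodule.mk_eq_zero _ _).1 h] at hve
    obtain ⟨r, hr⟩ := (finrank_eq_one_iff_of_nonzero' _ hv0).1 hrank ⟨x, hx⟩
    obtain rfl : r • v = x := congrArg Subtype.val hr
    rw [inner_smul_left, mul_eq_zero, or_iff_left hve, map_eq_zero] at hxe
    rw [hxe, zero_smul]
  · intro hdisj
    have hinj : Function.Injective ((innerₛₗ 𝕜 e).domRestrict W) := by
      refine (injective_iff_map_eq_zero _).2 fun x hx => Subtype.ext (hdisj x x.2 ?_)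
      exact inner_eq_zero_symm.1 hx
    obtain ⟨v, hv, hv0⟩ := Submodule.exists_mem_ne_zero_of_ne_bot hW
    have : FiniteDimensional 𝕜 W := .of_injective _ hinj
    have : Nontrivial W := W.nontrivial_iff_ne_bot.2 hW
    have hle : Module.finrank 𝕜 W ≤ 1 := by
      simpa using LinearMap.finrank_le_finrank_of_injective hinj
    exact ⟨le_antisymm hle Module.finrank_pos, v, hv, fun h => hv0 (hdisj v hv h)⟩

theorem separatesPosEigenvectors_iff_simple_and_exists_inner_ne_zero {e : E} {T : E →L[𝕜] E} :
    SeparatesPosEigenvectors e T ↔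
      ∀ a : ℝ, 0 < a → Module.End.HasEigenvalue T.toLinearMap (a : 𝕜) →
        Module.finrank 𝕜 (Module.End.eigenspace T.toLinearMap (a : 𝕜)) = 1 ∧
          ∃ v, T v = (a : 𝕜) • v ∧ ⟪v, e⟫_𝕜 ≠ 0 := by
  refine forall₂_congr fun a _ => ?_
  by_cases hW : Module.End.eigenspace T.toLinearMap (a : 𝕜) = ⊥
  · simp [Module.End.hasEigenvalue_iff, hW]
  · rw [← finrank_eq_one_and_exists_inner_ne_zero_iff hW]
    simp [Module.End.hasEigenvalue_iff, hW]

end Eigenvectors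

section CompactFamilies

theorem exists_tendsto_eigenvector_of_tendsto {𝕜 E : Type*} [NontriviallyNormedField 𝕜]
    [ProperSpace 𝕜] [NormedAddCommGroup E] [NormedSpace 𝕜 E] {T : ℕ → E →L[𝕜] E}
    {T₀ : E →L[𝕜] E} (hT : Tendsto T atTop (𝓝 T₀)) (hT₀ : IsCompactOperator T₀) {A : Set 𝕜}
    (hA : IsClosed A) (hA0 : (0 : 𝕜) ∉ A) {μ : ℕ → 𝕜} (hμ : ∀ k, μ k ∈ A) {v : ℕ → E}
    (hv : ∀ k, ‖v k‖ = 1) (hTv : ∀ k, T k (v k) = μ k • v k) :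
    ∃ μ₀ ∈ A, ∃ v₀, T₀ v₀ = μ₀ • v₀ ∧ ∃ φ : ℕ → ℕ, StrictMono φ ∧
      Tendsto (v ∘ φ) atTop (𝓝 v₀) := by
  obtain ⟨K, hK, hTK⟩ :=
    IsCompactOperator.image_closedBall_subset_compact (f := T₀.toLinearMap) hT₀ 1
  obtain ⟨C, hC⟩ := (Metric.isBounded_range_of_tendsto T hT).exists_norm_le
  have hμC (k) : μ k ∈ Metric.closedBall (0 : 𝕜) C := by
    have : ‖μ k‖ ≤ ‖T k‖ := by
      simpa [hTv, norm_smul, hv] using (T k).le_opNorm (v k)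
    simpa using this.trans (hC _ ⟨k, rfl⟩)
  have hTvK (k) : T₀ (v k) ∈ K := hTK ⟨v k, by simp [hv], rfl⟩
  obtain ⟨⟨μ₀, w⟩, -, φ, hφ, hlim⟩ :=
    ((isCompact_closedBall (0 : 𝕜) C).prod hK).tendsto_subseq fun k =>
      Set.mk_mem_prod (hμC k) (hTvK k)
  have hμlim : Tendsto (μ ∘ φ) atTop (𝓝 μ₀) := (continuous_fst.tendsto _).comp hlim
  have hwlim : Tendsto (fun k => T₀ (v (φ k))) atTop (𝓝 w) := (continuous_snd.tendsto _).comp hlim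
  have hμ₀ : μ₀ ∈ A := hA.mem_of_tendsto hμlim (.of_forall fun k => hμ (φ k))
  have hμ₀0 : μ₀ ≠ 0 := fun h => hA0 (h ▸ hμ₀)
  have hdiff : Tendsto (fun k => T (φ k) (v (φ k)) - T₀ (v (φ k))) atTop (𝓝 0) := by
    refine squeeze_zero_norm (fun k => ?_)
      ((tendsto_iff_norm_sub_tendsto_zero.1 hT).comp hφ.tendsto_atTop)
    simpa [hv] using (T (φ k) - T₀).le_opNorm (v (φ k))
  have hvlim : Tendsto (v ∘ φ) atTop (𝓝 (μ₀⁻¹ • w)) := by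
    refine ((hμlim.inv₀ hμ₀0).smul (by simpa using hdiff.add hwlim)).congr fun k => ?_
    rw [hTv, Function.comp_apply, Function.comp_apply, inv_smul_smul₀]
    exact fun h => hA0 (h ▸ hμ (φ k))
  have hw : T₀ (μ₀⁻¹ • w) = w :=
    tendsto_nhds_unique ((T₀.continuous.tendsto _).comp hvlim) hwlim
  exact ⟨μ₀, hμ₀, μ₀⁻¹ • w, by rw [hw, smul_inv_smul₀ hμ₀0], φ, hφ, hvlim⟩

variable {𝕜 E : Type*} [RCLike 𝕜]

theorem exists_norm_eq_one_of_not_disjoint [NormedAddCommGroup E] [NormedSpace 𝕜 E]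
    {V W : Submodule 𝕜 E} (h : ¬Disjoint V W) : ∃ v ∈ V, v ∈ W ∧ ‖v‖ = 1 := by
  obtain ⟨v, ⟨hvV, hvW⟩, hv⟩ := Submodule.exists_mem_ne_zero_of_ne_bot (disjoint_iff.not.1 h)
  exact ⟨(‖v‖⁻¹ : 𝕜) • v, V.smul_mem _ hvV, W.smul_mem _ hvW, norm_smul_inv_norm hv⟩

theorem isClosed_setOfPred_isCompactOperator_and_exists_not_disjoint_eigenspace
    [NormedAddCommGroup E] [NormedSpace 𝕜 E] [CompleteSpace E] {A : Set 𝕜} (hA : IsClosed A)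
    (hA0 : (0 : 𝕜) ∉ A) {W : Submodule 𝕜 E} (hW : IsClosed (W : Set E)) :
    IsClosed {T : E →L[𝕜] E | IsCompactOperator T ∧
      ∃ μ ∈ A, ¬Disjoint (Module.End.eigenspace T.toLinearMap μ) W} := by
  refine isClosed_of_closure_subset fun T₀ hT₀ => ?_
  obtain ⟨T, hTmem, hT⟩ := mem_closure_iff_seq_limit.1 hT₀
  have hcompact : IsCompactOperator T₀ :=
    isCompactOperator_of_tendsto hT (.of_forall fun k => (hTmem k).1)
  choose μ hμ v hTv hvW hv using fun k =>
    (hTmem k).2.imp fun _ h => h.imp_right exists_norm_eq_one_of_not_disjoint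
  obtain ⟨μ₀, hμ₀, v₀, hTv₀, φ, -, hlim⟩ :=
    exists_tendsto_eigenvector_of_tendsto hT hcompact hA hA0 hμ hv fun k =>
      Module.End.mem_eigenspace_iff.1 (hTv k)
  have hv₀W : v₀ ∈ W := hW.mem_of_tendsto hlim (.of_forall fun k => hvW _)
  have hv₀ : ‖v₀‖ = 1 := tendsto_nhds_unique hlim.norm (by simp [hv])
  refine ⟨hcompact, μ₀, hμ₀, fun h => ?_⟩
  rw [Submodule.disjoint_def.1 h v₀ (Module.End.mem_eigenspace_iff.2 hTv₀) hv₀W, norm_zero] at hv₀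
  exact zero_ne_one hv₀

variable [NormedAddCommGroup E] [InnerProductSpace 𝕜 E] [CompleteSpace E]

theorem isGδ_setOfPred_separatesPosEigenvectors {X : Type*} [TopologicalSpace X]
    {T : X → E →L[𝕜] E} (hT : Continuous T) (hcompact : ∀ x, IsCompactOperator (T x)) (e : E) :
    IsGδ {x | SeparatesPosEigenvectors e (T x)} := by
  let A (n : ℕ) : Set 𝕜 := RCLike.ofReal '' Set.Ici (1 / (n + 1) : ℝ)
  have hA (n) : IsClosed (A n) :=
    RCLike.ofRealLI.isometry.isClosedEmbedding.isClosedMap _ isClosed_Ici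
  have hA0 (n) : (0 : 𝕜) ∉ A n := by
    rintro ⟨a, ha, ha0⟩
    rw [RCLike.ofReal_eq_zero.1 ha0, Set.mem_Ici] at ha
    exact ha.not_gt Nat.one_div_pos_of_nat
  have hclosed (n) := (isClosed_setOfPred_isCompactOperator_and_exists_not_disjoint_eigenspace
    (hA n) (hA0 n) (Submodule.isClosed_orthogonal (𝕜 ∙ e))).preimage hT
  convert IsGδ.iInter_of_isOpen fun n => (hclosed n).isOpen_compl
  ext x
  simp only [SeparatesPosEigenvectors, A, Set.mem_ofPred_eq, Set.mem_iInter,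
    Set.mem_compl_iff, Set.mem_preimage, hcompact, true_and, not_exists, not_and,
    not_not, Set.forall_mem_image, Set.mem_Ici]
  refine ⟨fun h n a ha => h a (Nat.one_div_pos_of_nat.trans_le ha), fun h a ha => ?_⟩
  obtain ⟨n, hn⟩ := exists_nat_one_div_lt ha
  exact h n hn.le

end CompactFamilies

section Krylov

variable {R : Type*} [CommRing R] {n : ℕ}

/-- The Krylov matrix with columns `v, A v, …, A ^ (n - 1) v`. -/
def krylov (A : Matrix (Fin n) (Fin n) R) (v : Fin n → R) : Matrix (Fin n) (Fin n) R :=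
  Matrix.of fun i j => (A ^ (j : ℕ) *ᵥ v) i

theorem krylov_map {S : Type*} [CommRing S] (f : R →+* S) (A : Matrix (Fin n) (Fin n) R)
    (v : Fin n → R) : (krylov A v).map f = krylov (A.map f) (f ∘ v) := by
  ext i j
  simp only [krylov, Matrix.map_apply, Matrix.of_apply, RingHom.map_mulVec, ← Matrix.map_pow]

theorem vecMul_pow_of_vecMul_eq_smul {m : Type*} [Fintype m] [DecidableEq m] {A : Matrix m m R}
    {w : m → R} {μ : R} (hw : w ᵥ* A = μ • w) (k : ℕ) : w ᵥ* A ^ k = μ ^ k • w := by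
  induction k with
  | zero => simp
  | succ k ih => rw [pow_succ, ← Matrix.vecMul_vecMul, ih, Matrix.smul_vecMul, hw, smul_smul,
      pow_succ]

theorem eq_zero_of_vecMul_eq_smul_of_dotProduct_eq_zero [NoZeroDivisors R]
    {A : Matrix (Fin n) (Fin n) R} {v w : Fin n → R} (hdet : (krylov A v).det ≠ 0) {μ : R}
    (hw : w ᵥ* A = μ • w) (hwv : w ⬝ᵥ v = 0) : w = 0 := by
  refine Matrix.eq_zero_of_vecMul_eq_zero hdet (funext fun j => ?_)
  calc (w ᵥ* krylov A v) j = w ⬝ᵥ (A ^ (j : ℕ) *ᵥ v) := rfl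
    _ = μ ^ (j : ℕ) * (w ⬝ᵥ v) := by
      rw [Matrix.dotProduct_mulVec, vecMul_pow_of_vecMul_eq_smul hw, smul_dotProduct, smul_eq_mul]
    _ = 0 := by rw [hwv, mul_zero]

section Hessenberg

variable {A : Matrix (Fin (n + 1)) (Fin (n + 1)) R}

theorem isUpperTriangular_krylov_single_zero
    (hA : ∀ i j : Fin (n + 1), (j : ℕ) + 1 < i → A i j = 0) :
    (krylov A (Pi.single 0 1)).IsUpperTriangular := by
  suffices h : ∀ (k : ℕ) (i : Fin (n + 1)), k < i → (A ^ k *ᵥ Pi.single 0 1) i = 0 from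
    fun i j hij => h j i hij
  intro k
  induction k with
  | zero => exact fun i hi => by simp [Matrix.one_apply_ne (Fin.pos_iff_ne_zero.1 hi)]
  | succ k ih =>
    intro i hi
    rw [pow_succ', ← Matrix.mulVec_mulVec, Matrix.mulVec, dotProduct]
    refine Finset.sum_eq_zero fun j _ => ?_
    obtain hj | hj := lt_or_ge k (j : ℕ)
    · rw [ih j hj, mul_zero]
    · rw [hA i j (by omega), zero_mul]

theorem krylov_single_zero_succ
    (hA : ∀ i j : Fin (n + 1), (j : ℕ) + 1 < i → A i j = 0) (i : Fin n) :
    krylov A (Pi.single 0 1) i.succ i.succ =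
      A i.succ i.castSucc * krylov A (Pi.single 0 1) i.castSucc i.castSucc := by
  have hupper := isUpperTriangular_krylov_single_zero hA
  have hsucc : krylov A (Pi.single 0 1) i.succ i.succ =
      ∑ j, A i.succ j * krylov A (Pi.single 0 1) j i.castSucc := by
    simp only [krylov, Matrix.of_apply, Fin.val_succ, Fin.val_castSucc, pow_succ',
      ← Matrix.mulVec_mulVec]
    rfl
  rw [hsucc, Finset.sum_eq_single i.castSucc _ (by simp)]
  rintro j - hj
  obtain hj | hj := hj.lt_or_gt
  · rw [hA i.succ j (Nat.succ_lt_succ hj), zero_mul]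
  · exact mul_eq_zero_of_right _ (hupper hj)

theorem det_krylov_ne_zero_of_hessenberg [IsDomain R]
    (hA : ∀ i j : Fin (n + 1), (j : ℕ) + 1 < i → A i j = 0)
    (hsub : ∀ i : Fin n, A i.succ i.castSucc ≠ 0) : (krylov A (Pi.single 0 1)).det ≠ 0 := by
  rw [Matrix.det_of_isUpperTriangular (isUpperTriangular_krylov_single_zero hA)]
  suffices h : ∀ i, krylov A (Pi.single 0 1) i i ≠ 0 from Finset.prod_ne_zero_iff.2 fun i _ => h i
  intro i
  induction i using Fin.induction with
  | zero => simp [krylov]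
  | succ i ih =>
    rw [krylov_single_zero_succ hA]
    exact mul_ne_zero (hsub i) ih

end Hessenberg

open Polynomial in
theorem exists_eval_eq_det_krylov_mul (C D C' D' : Matrix (Fin n) (Fin n) R) (v : Fin n → R) :
    ∃ q : R[X], ∀ t, q.eval t = (krylov ((C + t • D) * (C' + t • D')) v).det := by
  let affine (A B : Matrix (Fin n) (Fin n) R) : Matrix (Fin n) (Fin n) R[X] :=
    A.map Polynomial.C + (X : R[X]) • B.map Polynomial.C
  have eval_affine (A B : Matrix (Fin n) (Fin n) R) (t : R) :
      (affine A B).map (evalRingHom t) = A + t • B := by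
    ext i j
    simp [affine, mul_comm t]
  refine ⟨(krylov (affine C D * affine C' D') (Polynomial.C ∘ v)).det, fun t => ?_⟩
  rw [← coe_evalRingHom, RingHom.map_det, RingHom.mapMatrix_apply, krylov_map, Matrix.map_mul,
    eval_affine, eval_affine]
  congr 2
  ext i
  simp

end Krylov

section HankelMatrix

/-- The leading `(n + 1) × (n + 1)` block of the infinite Hankel matrix with symbol `c`. -/
def hankelMatrix {R : Type*} (n : ℕ) (c : ℕ → R) : Matrix (Fin (n + 1)) (Fin (n + 1)) R :=
  Matrix.of fun i j => c (i + j)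

theorem conjTranspose_hankelMatrix {R : Type*} [Star R] (n : ℕ) (c : ℕ → R) :
    (hankelMatrix n c)ᴴ = hankelMatrix n (star c) := by
  ext i j
  simp [hankelMatrix, add_comm]

/-- The symbol `δ_{n-1} + δ_n`. Its Hankel matrix has ones on the antidiagonal and just above it,
which makes the matrix times its adjoint tridiagonal with ones next to the diagonal. -/
def modelSymbol (R : Type*) [Zero R] [One R] (n k : ℕ) : R :=
  if k = n ∨ k + 1 = n then 1 else 0

variable {R : Type*} [CommRing R] [StarRing R] {n : ℕ}

theorem hankelMatrix_modelSymbol_mul_conjTranspose_apply (i k : Fin (n + 1)) :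
    (hankelMatrix n (modelSymbol R n) * (hankelMatrix n (modelSymbol R n))ᴴ) i k =
      ∑ j : Fin (n + 1), if ((i + j : ℕ) = n ∨ (i + j + 1 : ℕ) = n) ∧
        ((k + j : ℕ) = n ∨ (k + j + 1 : ℕ) = n) then 1 else 0 := by
  rw [Matrix.mul_apply]
  refine Finset.sum_congr rfl fun j _ => ?_
  simp only [hankelMatrix, modelSymbol, Matrix.conjTranspose_apply, Matrix.of_apply, apply_ite star,
    star_one, star_zero, ite_and, ite_mul, one_mul, zero_mul]

theorem det_krylov_hankelMatrix_modelSymbol_ne_zero [IsDomain R] :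
    (krylov (hankelMatrix n (modelSymbol R n) * (hankelMatrix n (modelSymbol R n))ᴴ)
      (Pi.single 0 1)).det ≠ 0 := by
  refine det_krylov_ne_zero_of_hessenberg (fun i k hki => ?_) fun i => ?_
  · rw [hankelMatrix_modelSymbol_mul_conjTranspose_apply]
    exact Finset.sum_eq_zero fun j _ => if_neg (by omega)
  · rw [hankelMatrix_modelSymbol_mul_conjTranspose_apply, Finset.sum_eq_single i.succ.rev]
    · refine ne_of_eq_of_ne (if_pos ?_) one_ne_zero
      simp only [Fin.val_rev, Fin.val_succ, Fin.val_castSucc]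
      omega
    · rintro j - hj
      refine if_neg ?_
      simp only [ne_eq, Fin.ext_iff, Fin.val_rev, Fin.val_succ, Fin.val_castSucc] at hj ⊢
      omega
    · simp

end HankelMatrix

section LpPi

variable {𝕜 ι F : Type*} {G : ι → Type*} [NormedAddCommGroup F] [∀ i, NormedAddCommGroup (G i)]
  {p : ℝ≥0∞} [Fact (1 ≤ p)]
  [NontriviallyNormedField 𝕜] [NormedSpace 𝕜 F] [∀ i, NormedSpace 𝕜 (G i)]

theorem norm_apply_clm_le (G : Type*) [NormedAddCommGroup G] [NormedSpace 𝕜 G] (x : F) :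
    ‖ContinuousLinearMap.apply 𝕜 G x‖ ≤ ‖x‖ :=
  ContinuousLinearMap.opNorm_le_bound _ (norm_nonneg x) fun S => by
    simpa [mul_comm] using S.le_opNorm x

/-- Evaluation at `x` of an `ℓ^p` family of operators. -/
def lpEval (x : F) : lp (fun i => F →L[𝕜] G i) p →L[𝕜] lp G p :=
  lp.mapCLM p (fun i => ContinuousLinearMap.apply 𝕜 (G i) x) (norm_nonneg x)
    fun i => norm_apply_clm_le (G i) x

theorem norm_lpEval_le (x : F) :
    ‖(lpEval x : lp (fun i => F →L[𝕜] G i) p →L[𝕜] lp G p)‖ ≤ ‖x‖ :=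
  lp.norm_mapCLM_le ..

theorem norm_lpEval_apply_le (x : F) (T : lp (fun i => F →L[𝕜] G i) p) :
    ‖lpEval x T‖ ≤ ‖T‖ * ‖x‖ := by
  refine ((lpEval x).le_opNorm T).trans ?_
  rw [mul_comm]
  gcongr
  exact norm_lpEval_le x

/-- The `ℓ^p` analogue of `LinearMap.pi`, for families of bounded operators. -/
def lpPiₗ : lp (fun i => F →L[𝕜] G i) p →ₗ[𝕜] F →ₗ[𝕜] lp G p :=
  LinearMap.mk₂ 𝕜 (fun T x => lpEval x T)
    (fun S T x => map_add (lpEval x) S T)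
    (fun r T x => map_smul (lpEval x) r T)
    (fun T x y => lp.ext (funext fun i => map_add (T i) x y))
    (fun r T x => lp.ext (funext fun i => map_smul (T i) r x))

/-- The `ℓ^p` analogue of `ContinuousLinearMap.pi`: an `ℓ^p` family of operators `T i : F →L G i`
assembles to the operator `x ↦ (T i x)_i` from `F` to `ℓ^p(G)`. -/
def lpPi : lp (fun i => F →L[𝕜] G i) p →L[𝕜] F →L[𝕜] lp G p :=
  lpPiₗ.mkContinuous₂ 1 fun T x => by
    rw [one_mul]
    exact norm_lpEval_apply_le x T

@[simp]
theorem lpPi_apply_apply (T : lp (fun i => F →L[𝕜] G i) p) (x : F) (i : ι) :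
    lpPi T x i = T i x :=
  rfl

theorem lpPi_single [DecidableEq ι] (i : ι) (S : F →L[𝕜] G i) :
    lpPi (lp.single p i S) = lp.singleContinuousLinearMap 𝕜 G p i ∘L S := by
  ext x j
  obtain rfl | hij := eq_or_ne j i <;> simp [*]

theorem isCompactOperator_lpPi [∀ i, CompleteSpace (G i)] (hp : p ≠ ∞)
    {T : lp (fun i => F →L[𝕜] G i) p} (hT : ∀ i, IsCompactOperator (T i)) :
    IsCompactOperator (lpPi T) := by
  classical
  have hsum := (lpPi (𝕜 := 𝕜) (F := F) (G := G)).hasSum (lp.hasSum_single hp T)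
  refine isCompactOperator_of_tendsto hsum (.of_forall fun s => ?_)
  refine Submodule.sum_mem (compactOperator (RingHom.id 𝕜) F (lp G p)) fun i _ => ?_
  rw [lpPi_single]
  exact (hT i).clm_comp (lp.singleContinuousLinearMap 𝕜 G p i)

end LpPi

theorem hasSum_comp_add_of_nonneg {f : ℕ → ℝ} (hf : ∀ n, 0 ≤ f n) {S : ℝ}
    (h : HasSum (fun n : ℕ => (1 + n : ℝ) * f n) S) :
    HasSum (fun q : ℕ × ℕ => f (q.1 + q.2)) S := by
  rw [← Finset.HasAntidiagonal.sigmaAntidiagonalEquivProd.hasSum_iff]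
  have hdiag (n : ℕ) : HasSum
      (fun q : Finset.HasAntidiagonal.antidiagonal n => f (q.1.1 + q.1.2)) ((1 + n : ℝ) * f n) := by
    have (q : Finset.HasAntidiagonal.antidiagonal n) : f (q.1.1 + q.1.2) = f n := by
      rw [Finset.HasAntidiagonal.mem_antidiagonal.1 q.2]
    convert hasSum_fintype fun q : Finset.HasAntidiagonal.antidiagonal n => f (q.1.1 + q.1.2)
    simp [this, add_comm]
  have hsummable : Summable ((fun q : ℕ × ℕ => f (q.1 + q.2)) ∘
      Finset.HasAntidiagonal.sigmaAntidiagonalEquivProd) :=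
    (summable_sigma_of_nonneg fun _ => hf _).2
      ⟨fun n => (hdiag n).summable, h.summable.congr fun n => (hdiag n).tsum_eq.symm⟩
  rw [h.unique (hsummable.hasSum.sigma hdiag)]
  exact hsummable.hasSum

section SquareSummable

variable {ι : Type*} {G : ι → Type*} [∀ i, NormedAddCommGroup (G i)]

theorem memℓp_two_iff_summable_norm_sq {f : ∀ i, G i} :
    Memℓp f 2 ↔ Summable fun i => ‖f i‖ ^ 2 := by
  simpa using memℓp_gen_iff (f := f) (p := 2) (by norm_num)

theorem hasSum_norm_sq (x : lp G 2) : HasSum (fun i => ‖x i‖ ^ 2) (‖x‖ ^ 2) := by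
  simpa using lp.hasSum_norm (p := 2) (by norm_num) x

end SquareSummable

section Hankel

/-- The symbol `c` with weighted coordinates `√(1 + n) c_n = x_n`; as a function of `x`, the inverse
of `H12.toL2`. -/
def symbol : L2 →ₗ[ℂ] ℕ → ℂ where
  toFun x n := (√(1 + n) : ℂ)⁻¹ * x n
  map_add' x y := by
    ext n
    simp [mul_add]
  map_smul' r x := by
    ext n
    simp [mul_left_comm]

theorem ofReal_sqrt_one_add_natCast_ne_zero (n : ℕ) : ((√(1 + n) : ℝ) : ℂ) ≠ 0 := by
  rw [Complex.ofReal_ne_zero]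
  positivity

theorem wSeq_symbol (x : L2) : wSeq (symbol x) = x :=
  funext fun n => mul_inv_cancel_left₀ (ofReal_sqrt_one_add_natCast_ne_zero n) _

theorem symbol_toL2 (c : H12) : symbol c.toL2 = c.1 :=
  funext fun n => inv_mul_cancel_left₀ (ofReal_sqrt_one_add_natCast_ne_zero n) _

theorem hasSum_weight_mul_norm_symbol_sq (x : L2) :
    HasSum (fun n : ℕ => (1 + n : ℝ) * ‖symbol x n‖ ^ 2) (‖x‖ ^ 2) := by
  convert hasSum_norm_sq x with n
  have : (0 : ℝ) ≤ 1 + n := by positivity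
  simp [← wSeq_symbol x, wSeq, mul_pow, Real.sq_sqrt this, abs_of_nonneg]

theorem hasSum_norm_symbol_add_sq (x : L2) :
    HasSum (fun q : ℕ × ℕ => ‖symbol x (q.1 + q.2)‖ ^ 2) (‖x‖ ^ 2) :=
  hasSum_comp_add_of_nonneg (f := fun n => ‖symbol x n‖ ^ 2) (fun _ => sq_nonneg _)
    (hasSum_weight_mul_norm_symbol_sq x)

theorem inH12_symbol (x : L2) : InH12 (symbol x) := by
  have hx := (hasSum_weight_mul_norm_symbol_sq x).summable
  refine ⟨memℓp_two_iff_summable_norm_sq.2 ?_, ?_⟩ <;>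
    refine hx.of_nonneg_of_le (fun n => by positivity) fun n => ?_
  · exact le_mul_of_one_le_left (by positivity) (by simp)
  · gcongr
    simp

/-- `h^{1/2}` in its weighted coordinates. -/
def H12.isometryEquiv : H12 ≃ᵢ L2 where
  toFun := H12.toL2
  invFun x := ⟨symbol x, inH12_symbol x⟩
  left_inv c := Subtype.ext (symbol_toL2 c)
  right_inv x := lp.ext (wSeq_symbol x)
  isometry_toFun := Isometry.of_dist_eq fun _ _ => rfl

/-- The `n`-th row of the Hankel matrix with symbol `symbol x`. -/
def hankelRow (n : ℕ) : L2 →ₗ[ℂ] L2 where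
  toFun x := ⟨fun p => symbol x (n + p), memℓp_two_iff_summable_norm_sq.2 <|
    (hasSum_norm_symbol_add_sq x).summable.prod_factor n⟩
  map_add' x y := lp.ext (funext fun p => congrFun (map_add symbol x y) (n + p))
  map_smul' r x := lp.ext (funext fun p => congrFun (map_smul symbol r x) (n + p))

theorem hasSum_norm_hankelRow_sq (x : L2) : HasSum (fun n => ‖hankelRow n x‖ ^ 2) (‖x‖ ^ 2) :=
  (hasSum_norm_symbol_add_sq x).prod_fiberwise fun n => hasSum_norm_sq (hankelRow n x)

/-- The rows of a Hankel matrix, as an element of `ℓ²(ℕ, ℓ²)`. This is an isometry because the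
weight `1 + n` of `c_n` in the `h^{1/2}` norm counts the entries on the `n`-th antidiagonal. -/
def hankelRows : L2 →ₗᵢ[ℂ] lp (fun _ : ℕ => L2) 2 where
  toFun x := ⟨fun n => hankelRow n x,
    memℓp_two_iff_summable_norm_sq.2 (hasSum_norm_hankelRow_sq x).summable⟩
  map_add' x y := lp.ext (funext fun n => map_add (hankelRow n) x y)
  map_smul' r x := lp.ext (funext fun n => map_smul (hankelRow n) r x)
  norm_map' x := by
    refine (sq_eq_sq₀ (norm_nonneg _) (norm_nonneg x)).1 ?_
    exact (hasSum_norm_sq _).unique (hasSum_norm_hankelRow_sq x)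

/-- The bilinear pairing `(x, y) ↦ ∑ p, x_p y_p` on `ℓ²`. -/
def l2Pairing : L2 →L[ℂ] L2 →L[ℂ] ℂ :=
  lp.dualPairing 2 2 (fun _ => ContinuousLinearMap.mul ℂ ℂ) (K := 1)
    fun _ => ContinuousLinearMap.opNorm_mul_le ℂ ℂ

/-- The Hankel operator with symbol `symbol x`. -/
def hankel : L2 →L[ℂ] L2 →L[ℂ] L2 :=
  lpPi ∘L lp.mapCLM 2 (fun _ : ℕ => l2Pairing) (norm_nonneg l2Pairing) (fun _ => le_rfl) ∘L
    hankelRows.toContinuousLinearMap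

theorem hankel_eq_lpPi (x : L2) :
    hankel x = lpPi (lp.mapCLM 2 (fun _ : ℕ => l2Pairing) (norm_nonneg l2Pairing)
      (fun _ => le_rfl) (hankelRows x)) :=
  rfl

theorem isHankelOp_hankel (x : L2) : IsHankelOp (symbol x) (hankel x) :=
  fun _ _ => rfl

theorem isCompactOperator_hankel (x : L2) : IsCompactOperator (hankel x) := by
  rw [hankel_eq_lpPi]
  exact isCompactOperator_lpPi (by simp) fun _ => isCompactOperator_of_locallyCompactSpace_dom _

theorem isCompactOperator_opT_hankel (x : L2) : IsCompactOperator (opT (hankel x)) :=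
  (isCompactOperator_hankel x).comp_clm _

theorem continuous_opT : Continuous opT :=
  continuous_id.clm_comp ContinuousLinearMap.adjoint.continuous

end Hankel

section FiniteSymbol

variable {c : ℕ → ℂ} {Γ : L2 →L[ℂ] L2}

theorem IsHankelOp.unique {Γ' : L2 →L[ℂ] L2} (h : IsHankelOp c Γ) (h' : IsHankelOp c Γ') :
    Γ = Γ' := by
  ext x n
  rw [h x n, h' x n]

theorem IsHankelOp.adjoint (h : IsHankelOp c Γ) :
    IsHankelOp (star c) (ContinuousLinearMap.adjoint Γ) := by
  intro y m
  have hcol (n : ℕ) : Γ (lp.single 2 m 1) n = c (m + n) := by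
    rw [h, tsum_eq_single m fun p hp => by simp [hp], lp.single_apply_self, mul_one, add_comm]
  calc ContinuousLinearMap.adjoint Γ y m
      = ⟪lp.single 2 m (1 : ℂ), ContinuousLinearMap.adjoint Γ y⟫_ℂ := by
        simp [lp.inner_single_left]
    _ = ⟪Γ (lp.single 2 m 1), y⟫_ℂ := ContinuousLinearMap.adjoint_inner_right ..
    _ = ∑' p, star c (m + p) * y p := by
      simp [lp.inner_eq_tsum, hcol, mul_comm]

variable {n : ℕ}

theorem IsHankelOp.apply_eq_zero (h : IsHankelOp c Γ) (hc : ∀ k, n < k → c k = 0) (x : L2) {k : ℕ}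
    (hk : n < k) : Γ x k = 0 := by
  simp [h x k, hc _ (hk.trans_le (Nat.le_add_right k _))]

theorem IsHankelOp.apply_eq_hankelMatrix_mulVec (h : IsHankelOp c Γ) (hc : ∀ k, n < k → c k = 0)
    (x : L2) : (fun i : Fin (n + 1) => Γ x i) = hankelMatrix n c *ᵥ fun j => x j := by
  ext i
  rw [h, tsum_eq_sum (s := Finset.range (n + 1)), ← Fin.sum_univ_eq_sum_range]
  · rfl
  · intro p hp
    rw [hc, zero_mul]
    simp only [Finset.mem_range, not_lt] at hp
    omega

theorem IsHankelOp.opT_apply_eq_mulVec (h : IsHankelOp c Γ) (hc : ∀ k, n < k → c k = 0) (x : L2) :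
    (fun i : Fin (n + 1) => opT Γ x i) =
      (hankelMatrix n c * (hankelMatrix n c)ᴴ) *ᵥ fun j => x j := by
  have hc' (k) (hk : n < k) : star c k = 0 := by
    rw [Pi.star_apply, hc k hk, star_zero]
  rw [← Matrix.mulVec_mulVec, conjTranspose_hankelMatrix,
    ← h.adjoint.apply_eq_hankelMatrix_mulVec hc', ← h.apply_eq_hankelMatrix_mulVec hc]
  rfl

theorem IsHankelOp.separatesPosEigenvectors (h : IsHankelOp c Γ) (hc : ∀ k, n < k → c k = 0)
    (hdet : (krylov (hankelMatrix n c * (hankelMatrix n c)ᴴ) (Pi.single 0 1)).det ≠ 0) :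
    SeparatesPosEigenvectors e0 (opT Γ) := by
  intro a ha
  refine Submodule.disjoint_def.2 fun v hv hve => lp.ext (funext fun k => ?_)
  rw [Module.End.mem_eigenspace_iff, ContinuousLinearMap.coe_coe] at hv
  have hv0 : v 0 = 0 := by
    simpa [e0, lp.inner_single_left] using Submodule.mem_orthogonal_singleton_iff_inner_right.1 hve
  set H := hankelMatrix n c
  let w : Fin (n + 1) → ℂ := fun i => v i
  have hHw : (H * Hᴴ) *ᵥ w = (a : ℂ) • w := by
    rw [← h.opT_apply_eq_mulVec hc, hv]
    rfl
  have hw : star w = 0 := by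
    refine eq_zero_of_vecMul_eq_smul_of_dotProduct_eq_zero hdet (μ := a) ?_ ?_
    · rw [← (Matrix.isHermitian_mul_conjTranspose_self H).eq, ← Matrix.star_mulVec, hHw]
      simp
    · simp [w, hv0]
  obtain hk | hk := lt_or_ge n k
  · have hk0 : (a : ℂ) * v k = 0 := by
      rw [← h.apply_eq_zero hc (ContinuousLinearMap.adjoint Γ v) hk]
      exact (congrArg (fun x : L2 => x k) hv).symm
    exact (mul_eq_zero.1 hk0).resolve_left (Complex.ofReal_ne_zero.2 ha.ne')
  · exact congrFun (star_eq_zero.1 hw) ⟨k, Nat.lt_succ_of_le hk⟩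

end FiniteSymbol

section Density

variable {n : ℕ}

theorem inH12_of_finite_support {c : ℕ → ℂ} (hc : c.support.Finite) : InH12 c := by
  refine ⟨memℓp_two_iff_summable_norm_sq.2 ?_, ?_⟩ <;>
  · refine summable_of_hasFiniteSupport (hc.subset ?_)
    refine Function.support_subset_iff'.2 fun k hk => ?_
    simp [Function.notMem_support.1 hk]

theorem finite_setOfPred_not_separatesPosEigenvectors_segment {x d : L2}
    (hx : ∀ k, n < k → symbol x k = 0) (hd : ∀ k, n < k → symbol d k = 0)
    (hdet : (krylov (hankelMatrix n (symbol d) * (hankelMatrix n (symbol d))ᴴ)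
      (Pi.single 0 1)).det ≠ 0) :
    {t : ℝ | ¬SeparatesPosEigenvectors e0 (opT (hankel (x + (t : ℂ) • (d - x))))}.Finite := by
  set C := hankelMatrix n (symbol x)
  set D := hankelMatrix n (symbol d)
  obtain ⟨q, hq⟩ := exists_eval_eq_det_krylov_mul C (D - C) Cᴴ (D - C)ᴴ (Pi.single 0 1)
  have hq1 : q.eval 1 ≠ 0 := by
    rw [hq, one_smul, one_smul, ← Matrix.conjTranspose_add, add_sub_cancel]
    exact hdet
  have hq0 : q ≠ 0 := by
    rintro rfl
    exact hq1 Polynomial.eval_zero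
  refine ((Polynomial.finite_setOfPred_isRoot hq0).preimage
    Complex.ofReal_injective.injOn).subset fun t ht => ?_
  by_contra hroot
  have hsymbol : symbol (x + (t : ℂ) • (d - x)) =
      symbol x + (t : ℂ) • (symbol d - symbol x) := by
    rw [map_add, map_smul, map_sub]
  refine ht ((isHankelOp_hankel _).separatesPosEigenvectors (n := n) (fun k hk => ?_) ?_)
  · simp [hx k hk, hd k hk]
  · have hmatrix : hankelMatrix n (symbol (x + (t : ℂ) • (d - x))) = C + (t : ℂ) • (D - C) := by
      rw [hsymbol]
      rfl
    have hadjoint : (C + (t : ℂ) • (D - C))ᴴ = Cᴴ + (t : ℂ) • (D - C)ᴴ := by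
      rw [Matrix.conjTranspose_add, Matrix.conjTranspose_smul, ← starRingEnd_apply,
        Complex.conj_ofReal]
    rw [hmatrix, hadjoint, ← hq]
    exact hroot

theorem mem_closure_setOfPred_separatesPosEigenvectors {x : L2} (hx : ∀ k, n < k → x k = 0) :
    x ∈ closure {x | SeparatesPosEigenvectors e0 (opT (hankel x))} := by
  have hmodel (k) (hk : n < k) : modelSymbol ℂ n k = 0 := if_neg (by omega)
  have hsupport : (modelSymbol ℂ n).support.Finite :=
    (Set.finite_Iic n).subset (Function.support_subset_iff'.2 fun k hk => hmodel k (not_le.1 hk))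
  set d := H12.toL2 ⟨modelSymbol ℂ n, inH12_of_finite_support hsupport⟩
  have hd : symbol d = modelSymbol ℂ n := symbol_toL2 _
  have hfinite := finite_setOfPred_not_separatesPosEigenvectors_segment (x := x) (d := d)
    (fun k hk => mul_eq_zero_of_right _ (hx k hk)) (by simpa only [hd] using hmodel)
    (by simpa only [hd] using det_krylov_hankelMatrix_modelSymbol_ne_zero)
  have hlim : Tendsto (fun t : ℝ => x + (t : ℂ) • (d - x)) (𝓝[≠] 0) (𝓝 x) := by
    have hcont : Continuous fun t : ℝ => x + (t : ℂ) • (d - x) := by fun_prop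
    simpa using (hcont.tendsto 0).mono_left nhdsWithin_le_nhds
  exact mem_closure_of_tendsto hlim
    ((eventually_cofinite.2 hfinite).filter_mono (nhdsNE_le_cofinite 0))

theorem dense_setOfPred_separatesPosEigenvectors :
    Dense {x | SeparatesPosEigenvectors e0 (opT (hankel x))} := by
  intro x
  refine isClosed_closure.mem_of_tendsto (lp.hasSum_single (by simp) x).tendsto_sum_nat
    (.of_forall fun n => mem_closure_setOfPred_separatesPosEigenvectors (n := n) fun k hk => ?_)
  rw [lp.coeFn_sum, Finset.sum_apply]
  refine Finset.sum_eq_zero fun i hi => lp.single_apply_ne 2 _ _ ?_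
  exact ((Finset.mem_range.1 hi).trans hk).ne'

end Density

theorem exists_isHankelOp_and_iff (c : H12) {P : (L2 →L[ℂ] L2) → Prop} :
    (∃ Γ, IsHankelOp c.1 Γ ∧ P Γ) ↔ P (hankel c.toL2) := by
  have hc : IsHankelOp c.1 (hankel c.toL2) := symbol_toL2 c ▸ isHankelOp_hankel c.toL2
  exact ⟨fun ⟨_, hΓ, h⟩ => hΓ.unique hc ▸ h, fun h => ⟨_, hc, h⟩⟩

/-- The set of `c ∈ h^{1/2}` such that every positive eigenvalue of `Γ_c Γ_c*` is simple and
the orthogonal projection of `e₀` on each corresponding eigenspace is nonzero (equivalently,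
some eigenvector has nonzero inner product with `e₀`) is a dense `G_δ` subset of `h^{1/2}`. -/
theorem statement11 :
    Dense {c : H12 | ∃ Γ : L2 →L[ℂ] L2, IsHankelOp c.1 Γ ∧
      ∀ a : ℝ, 0 < a → Module.End.HasEigenvalue (opT Γ).toLinearMap (a : ℂ) →
        Module.finrank ℂ (Module.End.eigenspace (opT Γ).toLinearMap (a : ℂ)) = 1 ∧
        ∃ v : L2, (opT Γ) v = (a : ℂ) • v ∧ ⟪v, e0⟫_ℂ ≠ 0} ∧
    IsGδ {c : H12 | ∃ Γ : L2 →L[ℂ] L2, IsHankelOp c.1 Γ ∧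
      ∀ a : ℝ, 0 < a → Module.End.HasEigenvalue (opT Γ).toLinearMap (a : ℂ) →
        Module.finrank ℂ (Module.End.eigenspace (opT Γ).toLinearMap (a : ℂ)) = 1 ∧
        ∃ v : L2, (opT Γ) v = (a : ℂ) • v ∧ ⟪v, e0⟫_ℂ ≠ 0} := by
  simp only [exists_isHankelOp_and_iff, ← RCLike.ofReal_eq_complex_ofReal,
    ← separatesPosEigenvectors_iff_simple_and_exists_inner_ne_zero]
  constructor
  · exact dense_setOfPred_separatesPosEigenvectors.preimage
      H12.isometryEquiv.toHomeomorph.isOpenMap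
  · exact (isGδ_setOfPred_separatesPosEigenvectors (continuous_opT.comp hankel.continuous)
      isCompactOperator_opT_hankel e0).preimage H12.isometryEquiv.continuous

end
end

section
/- Let H be a complex Hilbert space and let A be a positive self-adjoint bounded operator on H of trace class, i.e. for some (equivalently, every) Hilbert basis (ε_i) of H one has Σ_i ⟨A ε_i, ε_i⟩ < ∞, this sum being independent of the basis and denoted Tr(A). Let e ∈ H and N ≥ 1 be such that A(e), A²(e), …, A^N(e) are linearly independent. Let G be the N×N matrix with entries G_{k,ℓ} = ⟨A^{k+ℓ} e, e⟩ for 0 ≤ k, ℓ ≤ N−1, and let B be the N×N matrix obtained from G by replacing its last column (the column ℓ = N−1) by the column (⟨A^{k+N} e, e⟩)_{0≤k≤N−1}. Then det G ≠ 0 and Tr(A) ≥ det B / det G, with equality if and only if the range of A is N-dimensional and e belongs to the range of A. -/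
open scoped InnerProductSpace

noncomputable section

variable {H : Type*} [NormedAddCommGroup H] [InnerProductSpace ℂ H] [CompleteSpace H]

/-- The Gram matrix `G_{k,ℓ} = ⟨A^{k+ℓ} e, e⟩`, `0 ≤ k, ℓ ≤ N-1`. -/
def gramG (A : H →L[ℂ] H) (e : H) (N : ℕ) : Matrix (Fin N) (Fin N) ℂ :=
  fun k l => ⟪e, (A ^ ((k : ℕ) + (l : ℕ))) e⟫_ℂ

/-- The matrix `B`: the Gram matrix `G` with its last column replaced by
`(⟨A^{k+N} e, e⟩)_{0 ≤ k ≤ N-1}`. -/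
def gramB (A : H →L[ℂ] H) (e : H) (N : ℕ) : Matrix (Fin N) (Fin N) ℂ :=
  fun k l => if (l : ℕ) = N - 1 then ⟪e, (A ^ ((k : ℕ) + N)) e⟫_ℂ
    else ⟪e, (A ^ ((k : ℕ) + (l : ℕ))) e⟫_ℂ

/-!
Write `K` for the span of `e, A e, …, A^(N-1) e` and `P` for the orthogonal projection onto `K`. In
the basis `A^k e` of `K`, the compression `P A|_K` acts as a shift except on the last vector, so its
trace is the last coordinate of `P (A^N e)`, which Cramer's rule applied to the normal equations
identifies with `det B / det G`. On the other hand, `Tr A - tr (P A|_K)` is the trace of the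
positive operator `(1 - P) A (1 - P)`. It is therefore nonnegative, and it vanishes exactly when
`A (1 - P) = 0`, that is, when `range A ⊆ K`. Since `A K` has dimension `N`, this means that
`range A = K`.
-/

section Krylov

variable {R M : Type*}

section Semiring

variable [Semiring R] [AddCommMonoid M] [Module R M] {f : Module.End R M} {x : M} {n : ℕ}

/-- The Krylov subspace spanned by `x, f x, …, f^(n-1) x`. -/
def krylovSubspace (f : Module.End R M) (x : M) (n : ℕ) : Submodule R M :=
  Submodule.span R (Set.range fun k : Fin n => (f ^ (k : ℕ)) x)

instance finite_krylovSubspace : Module.Finite R (krylovSubspace f x n) :=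
  Module.Finite.span_of_finite R (Set.finite_range _)

theorem mem_krylovSubspace_succ : x ∈ krylovSubspace f x (n + 1) :=
  Submodule.subset_span ⟨0, by simp only [Fin.val_zero, pow_zero, Module.End.one_apply]⟩

theorem krylovSubspace_le_range (hx : x ∈ f.range) : krylovSubspace f x n ≤ f.range := by
  rw [krylovSubspace, Submodule.span_le]
  rintro _ ⟨⟨_ | k, _⟩, rfl⟩
  · exact hx
  · exact ⟨(f ^ k) x, by simp only [pow_succ', Module.End.mul_apply]⟩

theorem map_krylovSubspace :
    (krylovSubspace f x n).map f =
      Submodule.span R (Set.range fun k : Fin n => (f ^ ((k : ℕ) + 1)) x) := by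
  rw [krylovSubspace, Submodule.map_span, ← Set.range_comp]
  simp only [Function.comp_def, pow_succ', Module.End.mul_apply]

theorem linearIndependent_pow_apply_of_pow_succ_apply {ι : Type*} {p : ι → ℕ}
    (h : LinearIndependent R fun i => (f ^ (p i + 1)) x) :
    LinearIndependent R fun i => (f ^ p i) x := by
  refine LinearIndependent.of_comp f ?_
  simpa only [Function.comp_def, pow_succ', Module.End.mul_apply] using h

end Semiring

section DivisionRing

variable [DivisionRing R] [AddCommGroup M] [Module R M] {f : Module.End R M} {x : M} {n : ℕ}

theorem finrank_krylovSubspace (h : LinearIndependent R fun k : Fin n => (f ^ (k : ℕ)) x) :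
    Module.finrank R (krylovSubspace f x n) = n := by
  rw [krylovSubspace, finrank_span_eq_card h, Fintype.card_fin]

theorem finrank_map_krylovSubspace
    (h : LinearIndependent R fun k : Fin n => (f ^ ((k : ℕ) + 1)) x) :
    Module.finrank R ((krylovSubspace f x n).map f) = n := by
  rw [map_krylovSubspace, finrank_span_eq_card h, Fintype.card_fin]

theorem range_le_krylovSubspace_succ_iff
    (h : LinearIndependent R fun k : Fin (n + 1) => (f ^ ((k : ℕ) + 1)) x) :
    f.range ≤ krylovSubspace f x (n + 1) ↔ f.rank = (n + 1 : ℕ) ∧ x ∈ f.range := by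
  have hK := finrank_krylovSubspace (linearIndependent_pow_apply_of_pow_succ_apply h)
  constructor
  · intro hle
    have := Submodule.finiteDimensional_of_le hle
    have hmap : Module.finrank R ((krylovSubspace f x (n + 1)).map f) ≤
        Module.finrank R f.range := Submodule.finrank_mono LinearMap.map_le_range
    rw [finrank_map_krylovSubspace h] at hmap
    have hrange : f.range = krylovSubspace f x (n + 1) :=
      Submodule.eq_of_le_of_finrank_le hle (hK.trans_le hmap)
    rw [LinearMap.rank, hrange, ← Module.finrank_eq_rank, hK]
    exact ⟨rfl, mem_krylovSubspace_succ⟩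
  · rintro ⟨hrank, hx⟩
    have hfinrank : Module.finrank R f.range = n + 1 := Module.finrank_eq_of_rank_eq hrank
    have : FiniteDimensional R f.range := Module.finite_of_finrank_pos (by omega)
    exact (Submodule.eq_of_le_of_finrank_eq (krylovSubspace_le_range hx)
      (hK.trans hfinrank.symm)).ge

end DivisionRing

end Krylov

theorem trace_eq_repr_last_of_shift {R M : Type*} [CommRing R] [AddCommGroup M] [Module R M]
    {n : ℕ} (u : Module.Basis (Fin (n + 1)) R M) {T : Module.End R M}
    (hT : ∀ k : Fin n, T (u k.castSucc) = u k.succ) :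
    LinearMap.trace R M T = u.repr (T (u (Fin.last n))) (Fin.last n) := by
  have hdiag (k : Fin n) : (LinearMap.toMatrix u u T).diag k.castSucc = 0 := by
    rw [Matrix.diag_apply, LinearMap.toMatrix_apply, hT, u.repr_self,
      Finsupp.single_eq_of_ne Fin.castSucc_lt_succ.ne]
  rw [LinearMap.trace_eq_matrix_trace R u T, Matrix.trace, Fin.sum_univ_castSucc]
  simp only [hdiag, Finset.sum_const_zero, zero_add, Matrix.diag_apply, LinearMap.toMatrix_apply]

section InnerProduct

variable {𝕜 E : Type*} [RCLike 𝕜] [NormedAddCommGroup E] [InnerProductSpace 𝕜 E]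

theorem apply_eq_zero_of_isPositive_of_re_inner_eq_zero {T : E →ₗ[𝕜] E} (hT : T.IsPositive)
    {x : E} (hx : RCLike.re ⟪T x, x⟫_𝕜 = 0) : T x = 0 := by
  -- Cauchy–Schwarz for the semi-inner product `⟪T x, y⟫`, at the vectors `x` and `T x`.
  let core : PreInnerProductSpace.Core 𝕜 E :=
    { inner := fun y z => ⟪T y, z⟫_𝕜
      conj_inner_symm := fun y z => by rw [inner_conj_symm, hT.isSymmetric]
      re_inner_nonneg := hT.re_inner_nonneg_left
      add_left := fun y z w => by rw [map_add, inner_add_left]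
      smul_left := fun y z r => by rw [map_smul, inner_smul_left] }
  have hCS : ‖⟪T x, T x⟫_𝕜‖ * ‖⟪T (T x), x⟫_𝕜‖ ≤
      RCLike.re ⟪T x, x⟫_𝕜 * RCLike.re ⟪T (T x), T x⟫_𝕜 :=
    @InnerProductSpace.Core.inner_mul_inner_self_le 𝕜 E _ _ _ core x (T x)
  rw [hT.isSymmetric (T x) x, hx, zero_mul] at hCS
  exact inner_self_eq_zero.1 <| norm_eq_zero.1 <|
    mul_self_eq_zero.1 (hCS.antisymm (mul_self_nonneg _))

section Compression

/-- The compression `P A|_K` of `A` to `K`, where `P` is the orthogonal projection onto `K`. -/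
def compression (K : Submodule 𝕜 E) [K.HasOrthogonalProjection] (A : E →ₗ[𝕜] E) : K →ₗ[𝕜] K :=
  K.orthogonalProjectionOnto.toLinearMap ∘ₗ A ∘ₗ K.subtype

theorem compression_comp_starProjection (K : Submodule 𝕜 E) [K.HasOrthogonalProjection]
    (A : E →ₗ[𝕜] E) : compression K (A ∘ₗ K.starProjection.toLinearMap) = compression K A := by
  ext x
  simp [compression]

variable {ι : Type*} (K : Submodule 𝕜 E) [FiniteDimensional 𝕜 K]

theorem trace_compression_eq_sum_inner (A : E →ₗ[𝕜] E) {κ : Type*} [Fintype κ]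
    (v : OrthonormalBasis κ 𝕜 K) :
    LinearMap.trace 𝕜 K (compression K A) = ∑ j, ⟪(v j : E), A (v j)⟫_𝕜 := by
  rw [LinearMap.trace_eq_sum_inner _ v]
  exact Finset.sum_congr rfl fun j _ =>
    K.inner_orthogonalProjectionOnto_eq_of_mem_left (v j) (A (v j))

theorem hasSum_inner_comp_starProjection (A : E →ₗ[𝕜] E) (b : HilbertBasis ι 𝕜 E) :
    HasSum (fun i => ⟪b i, A (K.starProjection (b i))⟫_𝕜)
      (LinearMap.trace 𝕜 K (compression K A)) := by
  let v := stdOrthonormalBasis 𝕜 K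
  rw [trace_compression_eq_sum_inner K A v]
  refine (hasSum_sum fun j _ => b.hasSum_inner_mul_inner (v j : E) (A (v j))).congr_fun
    fun i => ?_
  rw [v.starProjection_eq_sum_rankOne]
  simp [inner_sum, inner_smul_right]

variable [CompleteSpace E] (A : E →L[𝕜] E)

theorem hasSum_inner_starProjection_comp (b : HilbertBasis ι 𝕜 E) :
    HasSum (fun i => ⟪b i, K.starProjection (A (b i))⟫_𝕜)
      (LinearMap.trace 𝕜 K (compression K A)) := by
  let v := stdOrthonormalBasis 𝕜 K
  have h := hasSum_sum fun j (_ : j ∈ Finset.univ) =>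
    b.hasSum_inner_mul_inner (A.adjoint (v j : E)) (v j : E)
  simp only [ContinuousLinearMap.adjoint_inner_left] at h
  rw [trace_compression_eq_sum_inner K A v]
  refine h.congr_fun fun i => ?_
  rw [v.starProjection_eq_sum_rankOne]
  simp [inner_sum, inner_smul_right]

variable {A}

theorem hasSum_re_inner_starProjection_orthogonal (b : HilbertBasis ι 𝕜 E) {τ : ℝ}
    (hτ : HasSum (fun i => RCLike.re ⟪A (b i), b i⟫_𝕜) τ) :
    HasSum (fun i => RCLike.re ⟪A (Kᗮ.starProjection (b i)), Kᗮ.starProjection (b i)⟫_𝕜)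
      (τ - RCLike.re (LinearMap.trace 𝕜 K (compression K A))) := by
  have hPA := RCLike.hasSum_re 𝕜 (hasSum_inner_starProjection_comp K A b)
  have hAP := RCLike.hasSum_re 𝕜 (hasSum_inner_comp_starProjection K A b)
  have hPAP := RCLike.hasSum_re 𝕜 (hasSum_inner_starProjection_comp K (A ∘L K.starProjection) b)
  rw [ContinuousLinearMap.toLinearMap_comp, compression_comp_starProjection] at hPAP
  have h := ((hτ.sub hPA).sub hAP).add hPAP
  rw [sub_add_cancel] at h
  refine h.congr_fun fun i => ?_
  rw [inner_re_symm, Submodule.inner_starProjection_left_eq_right, inner_re_symm (A (b i))]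
  simp only [Submodule.starProjection_orthogonal_val, map_sub, inner_sub_right,
    ContinuousLinearMap.comp_apply, ContinuousLinearMap.coe_coe]
  ring

theorem re_trace_compression_le_tsum (hA : A.IsPositive) (b : HilbertBasis ι 𝕜 E)
    (hb : Summable fun i => RCLike.re ⟪A (b i), b i⟫_𝕜) :
    RCLike.re (LinearMap.trace 𝕜 K (compression K A)) ≤ ∑' i, RCLike.re ⟪A (b i), b i⟫_𝕜 :=
  sub_nonneg.1 <| (hasSum_re_inner_starProjection_orthogonal K b hb.hasSum).nonneg
    fun _ => hA.re_inner_nonneg_left _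

end Compression

theorem range_le_iff_orthogonal_le_ker {K : Submodule 𝕜 E} [K.HasOrthogonalProjection]
    {T : E →ₗ[𝕜] E} (hT : T.IsSymmetric) : T.range ≤ K ↔ Kᗮ ≤ T.ker :=
  calc T.range ≤ K
      ↔ T.range ⟂ Kᗮ := by rw [Submodule.IsOrtho, K.orthogonal_orthogonal]
    _ ↔ Kᗮ ≤ T.ker := by rw [Submodule.isOrtho_comm, Submodule.IsOrtho, hT.orthogonal_range]

theorem tsum_eq_re_trace_compression_iff [CompleteSpace E] {ι : Type*} {K : Submodule 𝕜 E}
    [FiniteDimensional 𝕜 K] {A : E →L[𝕜] E} (hA : A.IsPositive) (b : HilbertBasis ι 𝕜 E)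
    (hb : Summable fun i => RCLike.re ⟪A (b i), b i⟫_𝕜) :
    ∑' i, RCLike.re ⟪A (b i), b i⟫_𝕜 = RCLike.re (LinearMap.trace 𝕜 K (compression K A)) ↔
      A.toLinearMap.range ≤ K := by
  have h := hasSum_re_inner_starProjection_orthogonal K b hb.hasSum
  rw [range_le_iff_orthogonal_le_ker hA.isSymmetric]
  constructor
  · intro heq x hx
    rw [heq, sub_self, hasSum_zero_iff_of_nonneg fun _ => hA.re_inner_nonneg_left _] at h
    have hcomp : A ∘L Kᗮ.starProjection = 0 := by
      refine ContinuousLinearMap.ext_on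
        (Submodule.dense_iff_topologicalClosure_eq_top.2 b.dense_span) ?_
      rintro _ ⟨i, rfl⟩
      exact apply_eq_zero_of_isPositive_of_re_inner_eq_zero hA.toLinearMap (congrFun h i)
    simpa [Submodule.starProjection_eq_self_iff.2 hx] using DFunLike.congr_fun hcomp x
  · intro hker
    have hzero (x : E) : A (Kᗮ.starProjection x) = 0 :=
      hker (Submodule.starProjection_apply_mem Kᗮ x)
    simp only [hzero, inner_zero_left, map_zero] at h
    exact sub_eq_zero.1 (h.unique hasSum_zero)

section Gram

open Matrix

theorem det_gram_updateCol_inner {ι : Type*} [Fintype ι] [DecidableEq ι] {K : Submodule 𝕜 E}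
    [K.HasOrthogonalProjection] (u : Module.Basis ι 𝕜 K) (i : ι) (y : E) :
    ((gram 𝕜 fun k => (u k : E)).updateCol i fun k => ⟪(u k : E), y⟫_𝕜).det =
      u.repr (K.orthogonalProjectionOnto y) i * (gram 𝕜 fun k => (u k : E)).det := by
  have hnormal (k : ι) : ⟪(u k : E), y⟫_𝕜 =
      ∑ l, u.repr (K.orthogonalProjectionOnto y) l • gram 𝕜 (fun k => (u k : E)) k l := by
    rw [← K.inner_orthogonalProjectionOnto_eq_of_mem_left]
    conv_lhs => rw [← u.sum_repr (K.orthogonalProjectionOnto y)]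
    simp only [inner_sum, inner_smul_right, gram_apply, smul_eq_mul, Submodule.coe_inner]
  calc _ = ((gram 𝕜 fun k => (u k : E)).updateCol i fun k => ∑ l,
        u.repr (K.orthogonalProjectionOnto y) l • gram 𝕜 (fun k => (u k : E)) k l).det := by
        rw [funext hnormal]
    _ = _ := det_updateCol_sum _ i _

theorem det_gram_pow_updateCol_last (A : E →ₗ[𝕜] E) (e : E) (n : ℕ)
    (h : LinearIndependent 𝕜 fun k : Fin (n + 1) => (A ^ (k : ℕ)) e) :
    ((gram 𝕜 fun k : Fin (n + 1) => (A ^ (k : ℕ)) e).updateCol (Fin.last n)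
      fun k => ⟪(A ^ (k : ℕ)) e, (A ^ (n + 1)) e⟫_𝕜).det =
    LinearMap.trace 𝕜 _ (compression (krylovSubspace A e (n + 1)) A) *
      (gram 𝕜 fun k : Fin (n + 1) => (A ^ (k : ℕ)) e).det := by
  let K := krylovSubspace A e (n + 1)
  let u : Module.Basis (Fin (n + 1)) 𝕜 K := Module.Basis.span h
  have hu (k : Fin (n + 1)) : (u k : E) = (A ^ (k : ℕ)) e :=
    congrArg Subtype.val (Module.Basis.span_apply h k)
  have hAu (k : Fin (n + 1)) : A (u k) = (A ^ ((k : ℕ) + 1)) e := by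
    rw [hu, pow_succ', Module.End.mul_apply]
  have hshift (k : Fin n) : compression K A (u k.castSucc) = u k.succ := by
    have hAuk : A (u k.castSucc) = u k.succ := by
      rw [hAu, hu, Fin.val_castSucc, Fin.val_succ]
    simp [compression, hAuk]
  have hlast : compression K A (u (Fin.last n)) =
      K.orthogonalProjectionOnto ((A ^ (n + 1)) e) := by
    simp [compression, hAu]
  rw [trace_eq_repr_last_of_shift u hshift, hlast]
  simpa only [hu] using det_gram_updateCol_inner u (Fin.last n) ((A ^ (n + 1)) e)

end Gram

end InnerProduct

section GramMatrices

variable {A : H →L[ℂ] H}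

theorem inner_pow_add_apply (hA : IsSelfAdjoint A) (e : H) (k l : ℕ) :
    ⟪e, (A ^ (k + l)) e⟫_ℂ = ⟪(A.toLinearMap ^ k) e, (A.toLinearMap ^ l) e⟫_ℂ := by
  simp only [← ContinuousLinearMap.toLinearMap_pow, pow_add, mul_apply_eq_comp]
  exact ((hA.pow k).isSymmetric e ((A ^ l) e)).symm

theorem gramG_eq_gram (hA : IsSelfAdjoint A) (e : H) (N : ℕ) :
    gramG A e N = Matrix.gram ℂ fun k : Fin N => (A.toLinearMap ^ (k : ℕ)) e := by
  ext k l
  exact inner_pow_add_apply hA e k l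

theorem gramB_succ_eq_updateCol (hA : IsSelfAdjoint A) (e : H) (n : ℕ) :
    gramB A e (n + 1) =
      (Matrix.gram ℂ fun k : Fin (n + 1) => (A.toLinearMap ^ (k : ℕ)) e).updateCol (Fin.last n)
        fun k => ⟪(A.toLinearMap ^ (k : ℕ)) e, (A.toLinearMap ^ (n + 1)) e⟫_ℂ := by
  ext k l
  simp only [gramB, inner_pow_add_apply hA, Matrix.updateCol_apply, Matrix.gram_apply,
    Fin.ext_iff, Fin.val_last, Nat.add_sub_cancel]

theorem det_gramG_ne_zero (hA : IsSelfAdjoint A) {e : H} {N : ℕ}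
    (h : LinearIndependent ℂ fun k : Fin N => (A.toLinearMap ^ (k : ℕ)) e) :
    (gramG A e N).det ≠ 0 := by
  rw [gramG_eq_gram hA]
  exact Matrix.det_gram_ne_zero_iff_linearIndependent.2 h

theorem det_gramB_div_det_gramG (hA : IsSelfAdjoint A) {e : H} {n : ℕ}
    (h : LinearIndependent ℂ fun k : Fin (n + 1) => (A.toLinearMap ^ (k : ℕ)) e) :
    (gramB A e (n + 1)).det / (gramG A e (n + 1)).det =
      LinearMap.trace ℂ _ (compression (krylovSubspace A.toLinearMap e (n + 1)) A.toLinearMap) := by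
  rw [div_eq_iff (det_gramG_ne_zero hA h), gramB_succ_eq_updateCol hA, gramG_eq_gram hA]
  exact det_gram_pow_updateCol_last A.toLinearMap e n h

end GramMatrices

/-- Let `A` be a positive self-adjoint trace class operator on a Hilbert space `H`, with trace
`Tr(A) = Σ_i ⟨A ε_i, ε_i⟩` computed in any Hilbert basis `(ε_i)`. If `A(e), …, A^N(e)` are
linearly independent, then `det G ≠ 0`, `det B / det G` is real and `Tr(A) ≥ det B / det G`,
with equality if and only if the range of `A` is `N`-dimensional and `e` lies in the range
of `A`. -/
theorem statement15 (A : H →L[ℂ] H) (hsa : IsSelfAdjoint A)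
    (hpos : ∀ h : H, 0 ≤ (⟪A h, h⟫_ℂ).re)
    {ι : Type*} (b : HilbertBasis ι ℂ H)
    (htrace : Summable fun i : ι => (⟪A (b i), b i⟫_ℂ).re)
    (e : H) (N : ℕ) (hN : 1 ≤ N)
    (hind : LinearIndependent ℂ (fun k : Fin N => (A ^ ((k : ℕ) + 1)) e)) :
    (gramG A e N).det ≠ 0 ∧
    ((gramB A e N).det / (gramG A e N).det).im = 0 ∧
    ((gramB A e N).det / (gramG A e N).det).re ≤ ∑' i : ι, (⟪A (b i), b i⟫_ℂ).re ∧
    ((∑' i : ι, (⟪A (b i), b i⟫_ℂ).re) = ((gramB A e N).det / (gramG A e N).det).re ↔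
      (LinearMap.rank A.toLinearMap = N ∧ e ∈ LinearMap.range A.toLinearMap)) := by
  obtain ⟨n, rfl⟩ : ∃ n, N = n + 1 := Nat.exists_eq_add_of_le' hN
  have hA : A.IsPositive := ContinuousLinearMap.isPositive_def'.2 ⟨hsa, hpos⟩
  have hindA : LinearIndependent ℂ fun k : Fin (n + 1) => (A.toLinearMap ^ ((k : ℕ) + 1)) e := by
    simpa only [← ContinuousLinearMap.toLinearMap_pow, ContinuousLinearMap.coe_coe] using hind
  have hindK := linearIndependent_pow_apply_of_pow_succ_apply hindA
  have htr_real : (LinearMap.trace ℂ _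
      (compression (krylovSubspace A.toLinearMap e (n + 1)) A.toLinearMap)).im = 0 :=
    (RCLike.nonneg_iff.1 (hA.orthogonalProjectionOnto_comp _).toLinearMap.trace_nonneg).2
  rw [det_gramB_div_det_gramG hsa hindK]
  exact ⟨det_gramG_ne_zero hsa hindK, htr_real, re_trace_compression_le_tsum _ hA b htrace,
    (tsum_eq_re_trace_compression_iff hA b htrace).trans (range_le_krylovSubspace_succ_iff hindA)⟩

end
end
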